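/- arXiv:math/0507149 — 4 statements merged into one kernel-verified Lean document; each statement's English description precedes it below -/
import Mathlib

section
/- There exists a bijection Ψ from S_n to S_n such that for every permutation π: the set of weak excedance bottoms of Ψ(π) equals the set obtained by adding 1 to each descent bottom of π and adjoining 1; the set of weak excedance tops of Ψ(π) equals the set obtained by subtracting 1 from each descent top of π and adjoining n; and C_EE(Ψ(π)) + C_NN(Ψ(π)) equals the total right embracing number of π. -/
open Finset


def wexB {n : ℕ} (π : Equiv.Perm (Fin n)) : Finset (Fin n) :=
  Finset.univ.filter (fun i => i ≤ π i)

def wex {n : ℕ} (π : Equiv.Perm (Fin n)) : ℕ := (wexB π).card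

def wexbotsum {n : ℕ} (π : Equiv.Perm (Fin n)) : ℕ := ∑ i ∈ wexB π, (i.val + 1)

def wextopsum {n : ℕ} (π : Equiv.Perm (Fin n)) : ℕ := ∑ i ∈ wexB π, ((π i).val + 1)

def wexbotsSet {n : ℕ} (π : Equiv.Perm (Fin n)) : Finset ℕ :=
  (wexB π).image (fun i => i.val + 1)

def wextopsSet {n : ℕ} (π : Equiv.Perm (Fin n)) : Finset ℕ :=
  (wexB π).image (fun i => (π i).val + 1)

/-- `A_EE`: pairs `(i,j)` with `j < i ≤ π i < π j`. -/
def AEE {n : ℕ} (π : Equiv.Perm (Fin n)) : ℕ :=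
  (Finset.univ.filter (fun p : Fin n × Fin n =>
    p.2 < p.1 ∧ p.1 ≤ π p.1 ∧ π p.1 < π p.2)).card

/-- `A_NN`: pairs `(i,j)` with `π j < π i < i < j`. -/
def ANN {n : ℕ} (π : Equiv.Perm (Fin n)) : ℕ :=
  (Finset.univ.filter (fun p : Fin n × Fin n =>
    π p.2 < π p.1 ∧ π p.1 < p.1 ∧ p.1 < p.2)).card

/-- `A_EN`: pairs `(i,j)` with `j ≤ π j < π i < i`. -/
def AEN {n : ℕ} (π : Equiv.Perm (Fin n)) : ℕ :=
  (Finset.univ.filter (fun p : Fin n × Fin n =>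
    p.2 ≤ π p.2 ∧ π p.2 < π p.1 ∧ π p.1 < p.1)).card

/-- `A_NE`: pairs `(i,j)` with `π i < i < j ≤ π j`. -/
def ANE {n : ℕ} (π : Equiv.Perm (Fin n)) : ℕ :=
  (Finset.univ.filter (fun p : Fin n × Fin n =>
    π p.1 < p.1 ∧ p.1 < p.2 ∧ p.2 ≤ π p.2)).card

/-- `C_EE`: pairs `(i,j)` with `j < i ≤ π j < π i`. -/
def CEE {n : ℕ} (π : Equiv.Perm (Fin n)) : ℕ :=
  (Finset.univ.filter (fun p : Fin n × Fin n =>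
    p.2 < p.1 ∧ p.1 ≤ π p.2 ∧ π p.2 < π p.1)).card

/-- `C_NN`: pairs `(i,j)` with `π i < π j < i < j`. -/
def CNN {n : ℕ} (π : Equiv.Perm (Fin n)) : ℕ :=
  (Finset.univ.filter (fun p : Fin n × Fin n =>
    π p.1 < π p.2 ∧ π p.2 < p.1 ∧ p.1 < p.2)).card

def descents {n : ℕ} (π : Equiv.Perm (Fin n)) : Finset (Fin n) :=
  Finset.univ.filter (fun i => ∃ h : i.val + 1 < n, π ⟨i.val + 1, h⟩ < π i)

def des {n : ℕ} (π : Equiv.Perm (Fin n)) : ℕ := (descents π).card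

def destopsum {n : ℕ} (π : Equiv.Perm (Fin n)) : ℕ :=
  ∑ i ∈ descents π, ((π i).val + 1)

def desbotsum {n : ℕ} (π : Equiv.Perm (Fin n)) : ℕ :=
  ∑ i ∈ descents π, (if h : i.val + 1 < n then (π ⟨i.val + 1, h⟩).val + 1 else 0)

def destopsSet {n : ℕ} (π : Equiv.Perm (Fin n)) : Finset ℕ :=
  (descents π).image (fun i => (π i).val + 1)

def desbotsSet {n : ℕ} (π : Equiv.Perm (Fin n)) : Finset ℕ :=
  (descents π).image
    (fun i => if h : i.val + 1 < n then (π ⟨i.val + 1, h⟩).val + 1 else 0)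

def maj {n : ℕ} (π : Equiv.Perm (Fin n)) : ℕ := ∑ i ∈ descents π, (i.val + 1)

/-- Occurrences of the generalized pattern `(2-31)`. -/
def P2d31 {n : ℕ} (π : Equiv.Perm (Fin n)) : ℕ :=
  (Finset.univ.filter (fun p : Fin n × Fin n =>
    p.1 < p.2 ∧ ∃ h : p.2.val + 1 < n,
      π ⟨p.2.val + 1, h⟩ < π p.1 ∧ π p.1 < π p.2)).card

/-- Occurrences of the generalized pattern `(31-2)`. -/
def P31d2 {n : ℕ} (π : Equiv.Perm (Fin n)) : ℕ :=
  (Finset.univ.filter (fun p : Fin n × Fin n =>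
    ∃ h : p.1.val + 1 < n, π ⟨p.1.val + 1, h⟩ < π p.1 ∧ p.1.val + 1 < p.2.val ∧
      π ⟨p.1.val + 1, h⟩ < π p.2 ∧ π p.2 < π p.1)).card

/-- Occurrences of the generalized pattern `(21-3)`. -/
def P21d3 {n : ℕ} (π : Equiv.Perm (Fin n)) : ℕ :=
  (Finset.univ.filter (fun p : Fin n × Fin n =>
    ∃ h : p.1.val + 1 < n, π ⟨p.1.val + 1, h⟩ < π p.1 ∧ p.1.val + 1 < p.2.val ∧
      π p.1 < π p.2)).card

/-- Occurrences of the generalized pattern `(3-21)`. -/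
def P3d21 {n : ℕ} (π : Equiv.Perm (Fin n)) : ℕ :=
  (Finset.univ.filter (fun p : Fin n × Fin n =>
    p.1 < p.2 ∧ ∃ h : p.2.val + 1 < n,
      π ⟨p.2.val + 1, h⟩ < π p.2 ∧ π p.2 < π p.1)).card

/-- Occurrences of the generalized pattern `(1-32)`. -/
def P1d32 {n : ℕ} (π : Equiv.Perm (Fin n)) : ℕ :=
  (Finset.univ.filter (fun p : Fin n × Fin n =>
    p.1 < p.2 ∧ ∃ h : p.2.val + 1 < n,
      π ⟨p.2.val + 1, h⟩ < π p.2 ∧ π p.1 < π ⟨p.2.val + 1, h⟩)).card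

/-- Occurrences of the generalized pattern `(32-1)`. -/
def P32d1 {n : ℕ} (π : Equiv.Perm (Fin n)) : ℕ :=
  (Finset.univ.filter (fun p : Fin n × Fin n =>
    ∃ h : p.1.val + 1 < n, π ⟨p.1.val + 1, h⟩ < π p.1 ∧ p.1.val + 1 < p.2.val ∧
      π p.2 < π ⟨p.1.val + 1, h⟩)).card


/-- A permutation tableau with `n-k` columns, encoded as a `{0,1,2}`-filling of the full
`k × m` rectangle: the `2`'s are the boxes outside the Young diagram (southeast corner). -/
def IsPermTableau {k m : ℕ} (T : Fin k → Fin m → Fin 3) : Prop :=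
  (∀ j : Fin m, ∃ i : Fin k, T i j = 1) ∧
  (∀ (i : Fin k) (j : Fin m), T i j ≠ 2 →
    ∀ (i' : Fin k) (j' : Fin m), i' ≤ i → j' ≤ j → T i' j' ≠ 2) ∧
  (∀ (i : Fin k) (j : Fin m), T i j = 0 →
    ¬ ((∃ i' < i, T i' j = 1) ∧ (∃ j' < j, T i j' = 1)))

def rowLen {k m : ℕ} (T : Fin k → Fin m → Fin 3) (i : Fin k) : ℕ :=
  (Finset.univ.filter (fun j => T i j ≠ 2)).card

def zerosT {k m : ℕ} (T : Fin k → Fin m → Fin 3) : ℕ :=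
  ∑ i, (Finset.univ.filter (fun j => T i j = 0)).card

def onesT {k m : ℕ} (T : Fin k → Fin m → Fin 3) : ℕ :=
  ∑ i, (Finset.univ.filter (fun j => T i j = 1)).card

def twosT {k m : ℕ} (T : Fin k → Fin m → Fin 3) : ℕ :=
  ∑ i, (Finset.univ.filter (fun j => T i j = 2)).card

/-- A valid `0/1`-filling of the Young diagram with row lengths `lam`. -/
def ValidFilling {k : ℕ} (lam : Fin k → ℕ) (F : ∀ i : Fin k, Fin (lam i) → Bool) : Prop :=
  (∀ (i : Fin k) (j : Fin (lam i)), ∃ (i' : Fin k) (h : (j : ℕ) < lam i'), F i' ⟨j, h⟩ = true) ∧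
  (∀ (i : Fin k) (j : Fin (lam i)), F i j = false →
    ¬ ((∃ (i' : Fin k) (h : (j : ℕ) < lam i'), i' < i ∧ F i' ⟨j, h⟩ = true) ∧
       (∃ j' : Fin (lam i), j' < j ∧ F i j' = true)))

def fillZeros {k : ℕ} {lam : Fin k → ℕ} (F : ∀ i : Fin k, Fin (lam i) → Bool) : ℕ :=
  ∑ i, (Finset.univ.filter (fun j => F i j = false)).card

def fillOnes {k : ℕ} {lam : Fin k → ℕ} (F : ∀ i : Fin k, Fin (lam i) → Bool) : ℕ :=
  ∑ i, (Finset.univ.filter (fun j => F i j = true)).card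

open Classical in
/-- `F_λ(p,q)`, evaluated at integers `p`, `q`: the sum over valid fillings of
`p ^ (#0's) * q ^ (#1's)`. -/
noncomputable def Fval {k : ℕ} (lam : Fin k → ℕ) (p q : ℤ) : ℤ :=
  ∑ F ∈ Finset.univ.filter
      (fun F : ∀ i : Fin k, Fin (lam i) → Bool => ValidFilling lam F),
    p ^ fillZeros F * q ^ fillOnes F

theorem exists_rank (A : Finset ℕ) : ∀ c, c < A.card → ∃ p ∈ A, (A.filter (fun x => p < x)).card = c := by
  induction A using Finset.induction_on_max with
  | empty => intro c hc; simp at hc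
  | insert a s h ih =>
    intro c hc
    have ha : a ∉ s := fun hh => lt_irrefl _ (h a hh)
    rw [Finset.card_insert_of_notMem ha] at hc
    rcases Nat.eq_zero_or_pos c with rfl | hpos
    · refine ⟨a, by simp, ?_⟩
      rw [Finset.card_eq_zero, Finset.filter_eq_empty_iff]
      intro x hx
      rcases Finset.mem_insert.1 hx with rfl | hx
      · simp
      · have := h x hx; omega
    · obtain ⟨p, hp, hpc⟩ := ih (c - 1) (by omega)
      refine ⟨p, by simp [hp], ?_⟩
      rw [Finset.filter_insert, if_pos (h p hp), Finset.card_insert_of_notMem (by simp [ha]), hpc]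
      omega

theorem exists_rank' (A : Finset ℕ) : ∀ c, c < A.card → ∃ p ∈ A, (A.filter (fun x => x < p)).card = c := by
  induction A using Finset.induction_on_min with
  | empty => intro c hc; simp at hc
  | insert a s h ih =>
    intro c hc
    have ha : a ∉ s := fun hh => lt_irrefl _ (h a hh)
    rw [Finset.card_insert_of_notMem ha] at hc
    rcases Nat.eq_zero_or_pos c with rfl | hpos
    · refine ⟨a, by simp, ?_⟩
      rw [Finset.card_eq_zero, Finset.filter_eq_empty_iff]
      intro x hx
      rcases Finset.mem_insert.1 hx with rfl | hx
      · simp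
      · have := h x hx; omega
    · obtain ⟨p, hp, hpc⟩ := ih (c - 1) (by omega)
      refine ⟨p, by simp [hp], ?_⟩
      rw [Finset.filter_insert, if_pos (h p hp), Finset.card_insert_of_notMem (by simp [ha]), hpc]
      omega

theorem matchE (c : ℕ → ℕ) (Q : Finset ℕ) : ∀ P : Finset ℕ, P.card = Q.card →
    (∀ q ∈ Q, c q + (Q.filter (fun x => x < q)).card < (P.filter (fun x => x ≤ q)).card) →
    ∃ σ : ℕ → ℕ, (∀ q ∈ Q, σ q ∈ P ∧ σ q ≤ q) ∧ Set.InjOn σ Q ∧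
      ∀ q ∈ Q, (Q.filter (fun x => q < x ∧ σ q < σ x ∧ σ x ≤ q)).card = c q := by
  induction Q using Finset.induction_on_min with
  | empty => intro P _ _; exact ⟨id, by simp, by simp, by simp⟩
  | insert a s h ih =>
    intro P hcard hc
    have ha : a ∉ s := fun hh => lt_irrefl _ (h a hh)
    have h1 := hc a (by simp)
    obtain ⟨p, hp, hpc⟩ := exists_rank (P.filter (fun x => x ≤ a)) (c a) (by omega)
    rw [Finset.mem_filter] at hp
    obtain ⟨hpP, hpa⟩ := hp
    rw [Finset.card_insert_of_notMem ha] at hcard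
    have hce : (P.erase p).card = s.card := by rw [Finset.card_erase_of_mem hpP]; omega
    obtain ⟨σ, hσ, hinj, hcnt⟩ := ih (P.erase p) hce (by
      intro q hq
      have h2 := hc q (by simp [hq])
      have haq := h q hq
      rw [Finset.filter_insert, if_pos haq, Finset.card_insert_of_notMem (by simp [ha])] at h2
      have h3 : (P.filter (fun x => x ≤ q)).erase p = (P.erase p).filter (fun x => x ≤ q) := by
        ext x; simp; tauto
      rw [← h3, Finset.card_erase_of_mem (by simp [hpP]; omega)]
      omega)
    have himg : s.image σ = P.erase p := by
      apply Finset.eq_of_subset_of_card_le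
      · intro x hx
        obtain ⟨q, hq, rfl⟩ := Finset.mem_image.1 hx
        exact (hσ q hq).1
      · rw [Finset.card_image_of_injOn hinj, hce]
    have hne : ∀ q ∈ s, q ≠ a := fun q hq e => ha (e ▸ hq)
    have hup : ∀ q ∈ s, Function.update σ a p q = σ q := fun q hq => by
      rw [Function.update_of_ne (hne q hq)]
    refine ⟨Function.update σ a p, ?_, ?_, ?_⟩
    · intro q hq
      rcases Finset.mem_insert.1 hq with rfl | hq
      · simp [hpP, hpa]
      · rw [hup q hq]; exact ⟨Finset.mem_of_mem_erase (hσ q hq).1, (hσ q hq).2⟩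
    · intro x hx y hy hxy
      rw [Finset.mem_coe, Finset.mem_insert] at hx hy
      rcases hx with rfl | hx <;> rcases hy with rfl | hy
      · rfl
      · rw [hup y hy, Function.update_self] at hxy
        exact absurd hxy.symm (Finset.ne_of_mem_erase (hσ y hy).1)
      · rw [hup x hx, Function.update_self] at hxy
        exact absurd hxy (Finset.ne_of_mem_erase (hσ x hx).1)
      · rw [hup x hx, hup y hy] at hxy; exact hinj hx hy hxy
    · intro q hq
      rcases Finset.mem_insert.1 hq with rfl | hq
      · rw [← hpc, Finset.filter_insert, if_neg (by simp)]
        have : (P.filter (fun x => x ≤ q)).filter (fun x => p < x) =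
            (s.filter (fun x => p < σ x ∧ σ x ≤ q)).image σ := by
          ext x
          simp only [Finset.mem_filter, Finset.mem_image]
          constructor
          · rintro ⟨⟨h1, h2⟩, h3⟩
            have : x ∈ s.image σ := by rw [himg]; simp [h1]; omega
            obtain ⟨y, hy, rfl⟩ := Finset.mem_image.1 this
            exact ⟨y, ⟨hy, h3, h2⟩, rfl⟩
          · rintro ⟨y, ⟨hy, h3, h2⟩, rfl⟩
            exact ⟨⟨Finset.mem_of_mem_erase (hσ y hy).1, h2⟩, h3⟩
        rw [this, Finset.card_image_of_injOn (hinj.mono (by intro x; simp; tauto))]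
        congr 1
        apply Finset.filter_congr
        intro x hx
        have := h x hx
        rw [hup x hx, Function.update_self]; tauto
      · rw [← hcnt q hq, Finset.filter_insert, if_neg (by have := h q hq; omega)]
        congr 1
        apply Finset.filter_congr
        intro x hx
        rw [hup x hx, hup q hq]

theorem matchN (c : ℕ → ℕ) (Q : Finset ℕ) : ∀ P : Finset ℕ, P.card = Q.card →
    (∀ q ∈ Q, c q + (Q.filter (fun x => q < x)).card < (P.filter (fun x => q < x)).card) →
    ∃ σ : ℕ → ℕ, (∀ q ∈ Q, σ q ∈ P ∧ q < σ q) ∧ Set.InjOn σ Q ∧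
      ∀ q ∈ Q, (Q.filter (fun x => x < q ∧ σ x < σ q ∧ q < σ x)).card = c q := by
  induction Q using Finset.induction_on_max with
  | empty => intro P _ _; exact ⟨id, by simp, by simp, by simp⟩
  | insert a s h ih =>
    intro P hcard hc
    have ha : a ∉ s := fun hh => lt_irrefl _ (h a hh)
    have h1 := hc a (by simp)
    obtain ⟨p, hp, hpc⟩ := exists_rank' (P.filter (fun x => a < x)) (c a) (by omega)
    rw [Finset.mem_filter] at hp
    obtain ⟨hpP, hpa⟩ := hp
    rw [Finset.card_insert_of_notMem ha] at hcard
    have hce : (P.erase p).card = s.card := by rw [Finset.card_erase_of_mem hpP]; omega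
    obtain ⟨σ, hσ, hinj, hcnt⟩ := ih (P.erase p) hce (by
      intro q hq
      have h2 := hc q (by simp [hq])
      have haq := h q hq
      rw [Finset.filter_insert, if_pos haq, Finset.card_insert_of_notMem (by simp [ha])] at h2
      have h3 : (P.filter (fun x => q < x)).erase p = (P.erase p).filter (fun x => q < x) := by
        ext x; simp; tauto
      rw [← h3, Finset.card_erase_of_mem (by simp [hpP]; omega)]
      omega)
    have himg : s.image σ = P.erase p := by
      apply Finset.eq_of_subset_of_card_le
      · intro x hx
        obtain ⟨q, hq, rfl⟩ := Finset.mem_image.1 hx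
        exact (hσ q hq).1
      · rw [Finset.card_image_of_injOn hinj, hce]
    have hne : ∀ q ∈ s, q ≠ a := fun q hq e => ha (e ▸ hq)
    have hup : ∀ q ∈ s, Function.update σ a p q = σ q := fun q hq => by
      rw [Function.update_of_ne (hne q hq)]
    refine ⟨Function.update σ a p, ?_, ?_, ?_⟩
    · intro q hq
      rcases Finset.mem_insert.1 hq with rfl | hq
      · simp [hpP, hpa]
      · rw [hup q hq]; exact ⟨Finset.mem_of_mem_erase (hσ q hq).1, (hσ q hq).2⟩
    · intro x hx y hy hxy
      rw [Finset.mem_coe, Finset.mem_insert] at hx hy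
      rcases hx with rfl | hx <;> rcases hy with rfl | hy
      · rfl
      · rw [hup y hy, Function.update_self] at hxy
        exact absurd hxy.symm (Finset.ne_of_mem_erase (hσ y hy).1)
      · rw [hup x hx, Function.update_self] at hxy
        exact absurd hxy (Finset.ne_of_mem_erase (hσ x hx).1)
      · rw [hup x hx, hup y hy] at hxy; exact hinj hx hy hxy
    · intro q hq
      rcases Finset.mem_insert.1 hq with rfl | hq
      · rw [← hpc, Finset.filter_insert, if_neg (by simp)]
        have : (P.filter (fun x => q < x)).filter (fun x => x < p) =
            (s.filter (fun x => σ x < p ∧ q < σ x)).image σ := by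
          ext x
          simp only [Finset.mem_filter, Finset.mem_image]
          constructor
          · rintro ⟨⟨h1, h2⟩, h3⟩
            have : x ∈ s.image σ := by rw [himg]; simp [h1]; omega
            obtain ⟨y, hy, rfl⟩ := Finset.mem_image.1 this
            exact ⟨y, ⟨hy, h3, h2⟩, rfl⟩
          · rintro ⟨y, ⟨hy, h3, h2⟩, rfl⟩
            exact ⟨⟨Finset.mem_of_mem_erase (hσ y hy).1, h2⟩, h3⟩
        rw [this, Finset.card_image_of_injOn (hinj.mono (by intro x; simp; tauto))]
        congr 1
        apply Finset.filter_congr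
        intro x hx
        have := h x hx
        rw [hup x hx, Function.update_self]; tauto
      · rw [← hcnt q hq, Finset.filter_insert, if_neg (by have := h q hq; omega)]
        congr 1
        apply Finset.filter_congr
        intro x hx
        rw [hup x hx, hup q hq]

/-- a word `w` on `0..n-1` with inverse `p`. -/
structure IsWord (n : ℕ) (w p : ℕ → ℕ) : Prop where
  wlt : ∀ i < n, w i < n
  plt : ∀ i < n, p i < n
  pw : ∀ i < n, p (w i) = i
  wp : ∀ i < n, w (p i) = i

def dD (n : ℕ) (w : ℕ → ℕ) : Finset ℕ := (range n).filter (fun i => i + 1 < n ∧ w (i+1) < w i)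
def dB (n : ℕ) (w : ℕ → ℕ) : Finset ℕ := (dD n w).image (fun i => w (i+1))
def dT (n : ℕ) (w : ℕ → ℕ) : Finset ℕ := (dD n w).image (fun i => w i)
def emb (n : ℕ) (w p : ℕ → ℕ) (v : ℕ) : ℕ :=
  ((range n).filter (fun q => q + 1 < n ∧ p v < q ∧ w (q+1) < v ∧ v < w q)).card

theorem mem_dB {n w p} (H : IsWord n w p) {b : ℕ} (hb : b < n) :
    b ∈ dB n w ↔ 0 < p b ∧ b < w (p b - 1) := by
  simp only [dB, dD, mem_image, mem_filter, mem_range]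
  constructor
  · rintro ⟨i, ⟨h1, h2, h3⟩, rfl⟩
    rw [H.pw _ h2]; simpa using h3
  · rintro ⟨h1, h2⟩
    have := H.plt b hb
    have e : p b - 1 + 1 = p b := by omega
    refine ⟨p b - 1, ⟨by omega, by omega, ?_⟩, ?_⟩
    · rw [e, H.wp b hb]; exact h2
    · rw [e, H.wp b hb]

theorem mem_dT {n w p} (H : IsWord n w p) {b : ℕ} (hb : b < n) :
    b ∈ dT n w ↔ p b + 1 < n ∧ w (p b + 1) < b := by
  simp only [dT, dD, mem_image, mem_filter, mem_range]
  constructor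
  · rintro ⟨i, ⟨h1, h2, h3⟩, rfl⟩
    rw [H.pw _ h1]; exact ⟨h2, h3⟩
  · rintro ⟨h1, h2⟩
    exact ⟨p b, ⟨by omega, by omega, by rw [H.wp b hb]; exact h2⟩, H.wp b hb⟩

theorem winj {n w p} (H : IsWord n w p) {i j : ℕ} (hi : i < n) (hj : j < n) (h : w i = w j) : i = j := by
  rw [← H.pw i hi, h, H.pw j hj]
theorem pinj {n w p} (H : IsWord n w p) {i j : ℕ} (hi : i < n) (hj : j < n) (h : p i = p j) : i = j := by
  rw [← H.wp i hi, h, H.wp j hj]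

/-- number of bottoms below / tops at most. -/
theorem card_B {n w p} (H : IsWord n w p) (P : ℕ → Prop) [DecidablePred P] :
    ((dB n w).filter P).card = ((dD n w).filter (fun i => P (w (i+1)))).card := by
  rw [dB, Finset.filter_image, Finset.card_image_of_injOn]
  intro i hi j hj h
  simp [dD] at hi hj
  have := winj H hi.1.2.1 hj.1.2.1 h
  omega

theorem card_T {n w p} (H : IsWord n w p) (P : ℕ → Prop) [DecidablePred P] :
    ((dT n w).filter P).card = ((dD n w).filter (fun i => P (w i))).card := by
  rw [dT, Finset.filter_image, Finset.card_image_of_injOn]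
  intro i hi j hj h
  simp [dD] at hi hj
  exact winj H hi.1.1 hj.1.1 h

theorem emb_bound {n w p} (H : IsWord n w p) (v : ℕ) :
    emb n w p v + ((dT n w).filter (fun x => x ≤ v)).card ≤ ((dB n w).filter (fun x => x < v)).card := by
  rw [card_B H, card_T H, emb, ← Finset.card_union_of_disjoint]
  · apply Finset.card_le_card
    intro x
    simp only [dD, mem_union, mem_filter, mem_range]
    grind
  · rw [Finset.disjoint_left]
    simp only [dD, mem_filter, mem_range]
    grind

def sS (n : ℕ) (w p : ℕ → ℕ) (v : ℕ) : Finset ℕ :=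
  (range v).filter (fun b => 0 < p b ∧ v ≤ w (p b - 1))

theorem mem_sS {n w p} (H : IsWord n w p) {v b : ℕ} (hv : v ≤ n) :
    b ∈ sS n w p v ↔ b < v ∧ b ∈ dB n w ∧ ¬ ∃ y, b < y ∧ y < v ∧ y ∈ dT n w ∧ p y < p b ∧
      ∀ z < y, ¬ (p y < p z ∧ p z < p b) := by
  simp only [sS, mem_filter, mem_range]
  constructor
  · rintro ⟨h1, h2, h3⟩
    refine ⟨h1, (mem_dB H (by omega)).2 ⟨h2, by omega⟩, ?_⟩
    rintro ⟨y, y1, y2, y3, y4, y5⟩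
    rw [mem_dT H (by omega)] at y3
    have := y5 _ y3.2
    rw [H.pw _ y3.1] at this
    have e : p y = p b - 1 := by omega
    rw [← e, H.wp y (by omega)] at h3
    omega
  · rintro ⟨h1, h2, h3⟩
    rw [mem_dB H (by omega)] at h2
    refine ⟨h1, h2.1, ?_⟩
    by_contra hlt
    apply h3
    have hpb := H.plt b (by omega)
    have e : p b - 1 + 1 = p b := by omega
    have e2 := H.pw (p b - 1) (by omega)
    refine ⟨w (p b - 1), h2.2, by omega, ?_, by omega, ?_⟩
    · rw [mem_dT H (by omega), e2, e, H.wp b (by omega)]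
      exact ⟨by omega, h2.2⟩
    · intro z hz; omega

def sU (n : ℕ) (w p : ℕ → ℕ) (v : ℕ) : Finset ℕ := (sS n w p v).filter (fun b => p v < p b)

theorem card_sU {n w p} (H : IsWord n w p) {v : ℕ} (hv : v < n) :
    (sU n w p v).card = emb n w p v + if v ∈ dT n w then 1 else 0 := by
  have h1 : sU n w p v = ((range n).filter
      (fun q => q + 1 < n ∧ p v ≤ q ∧ w (q+1) < v ∧ v ≤ w q)).image (fun q => w (q+1)) := by
    ext b
    simp only [sU, sS, mem_filter, mem_range, mem_image]
    constructor
    · rintro ⟨⟨h1, h2, h3⟩, h4⟩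
      have hpb := H.plt b (by omega)
      have e : p b - 1 + 1 = p b := by omega
      refine ⟨p b - 1, ⟨by omega, by omega, by omega, ?_, h3⟩, ?_⟩
      · rw [e, H.wp b (by omega)]; exact h1
      · rw [e, H.wp b (by omega)]
    · rintro ⟨q, ⟨h1, h2, h3, h4, h5⟩, rfl⟩
      rw [H.pw _ h2]
      exact ⟨⟨h4, by omega, by simpa using h5⟩, by omega⟩
  rw [h1, Finset.card_image_of_injOn]
  · have hT := mem_dT H hv
    have e := H.wp v hv
    have e2 := H.plt v hv
    split_ifs with h
    · have : (range n).filter (fun q => q + 1 < n ∧ p v ≤ q ∧ w (q+1) < v ∧ v ≤ w q) =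
        insert (p v) ((range n).filter (fun q => q + 1 < n ∧ p v < q ∧ w (q+1) < v ∧ v < w q)) := by
        ext q
        simp only [mem_insert, mem_filter, mem_range]
        constructor
        · rintro ⟨a, b, c, d, f⟩
          by_cases hq : q = p v
          · exact Or.inl hq
          · refine Or.inr ⟨a, b, by omega, d, lt_of_le_of_ne f ?_⟩
            rintro rfl
            exact hq (H.pw q a).symm
        · rintro (rfl | ⟨a, b, c, d, f⟩)
          · have := hT.1 h
            exact ⟨e2, this.1, le_rfl, this.2, e.ge⟩
          · exact ⟨a, b, c.le, d, f.le⟩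
      rw [this, Finset.card_insert_of_notMem (by simp), emb]
    · rw [emb, add_zero]
      congr 1
      apply Finset.filter_congr
      intro q hq
      rw [mem_range] at hq
      constructor
      · rintro ⟨b, c, d, f⟩
        have hq' : q ≠ p v := by rintro rfl; exact h (hT.2 ⟨b, d⟩)
        refine ⟨b, by omega, d, lt_of_le_of_ne f ?_⟩
        rintro rfl
        exact hq' (H.pw q hq).symm
      · rintro ⟨b, c, d, f⟩
        exact ⟨b, c.le, d, f.le⟩
  · intro i hi j hj h
    simp at hi hj
    have := winj H hi.2.1 hj.2.1 h
    omega

theorem before_iff {n w p} (H : IsWord n w p) {v x : ℕ} (hv : v < n) (hx : x < v) :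
    p v < p x ↔ ∃ b ∈ sU n w p v, p b ≤ p x := by
  constructor
  · intro h
    have hpx := H.plt x (by omega)
    have hpv := H.plt v hv
    -- last letter `≥ v` before `x`
    have hne : ((range (p x)).filter (fun i => v ≤ w i)).Nonempty :=
      ⟨p v, by simp [h, H.wp v hv]⟩
    obtain ⟨i, hi, hmax⟩ := Finset.exists_max_image _ id hne
    simp only [mem_filter, mem_range, id] at hi hmax
    have h1 : p v ≤ i := hmax _ ⟨h, (H.wp v hv).ge⟩
    have h2 : w (i+1) < v := by
      by_contra hh
      rcases Nat.lt_or_ge (i+1) (p x) with h3 | h3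
      · have := hmax (i+1) ⟨h3, by omega⟩; omega
      · have : i + 1 = p x := by omega
        rw [this, H.wp x (by omega)] at hh; omega
    refine ⟨w (i+1), ?_, ?_⟩
    · simp only [sU, sS, mem_filter, mem_range]
      rw [H.pw _ (by omega)]
      exact ⟨⟨h2, by omega, by simpa using hi.2⟩, by omega⟩
    · rw [H.pw _ (by omega)]; omega
  · rintro ⟨b, hb, hle⟩
    simp only [sU, mem_filter] at hb
    omega

theorem word_unique {n w p w' p'} (H : IsWord n w p) (H' : IsWord n w' p')
    (hB : dB n w = dB n w') (hT : dT n w = dT n w') (hE : ∀ v < n, emb n w p v = emb n w' p' v) :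
    ∀ i < n, w i = w' i := by
  have key : ∀ m ≤ n, ∀ x < m, ∀ y < m, (p x < p y ↔ p' x < p' y) := by
    intro m
    induction m with
    | zero => intro _ x hx; omega
    | succ v ih =>
      intro hv
      have ih := ih (by omega)
      have hS : sS n w p v = sS n w' p' v := by
        ext b
        rw [mem_sS H (by omega), mem_sS H' (by omega), hB, hT]
        apply and_congr_right; intro hb
        apply and_congr_right; intro _
        apply not_congr
        apply exists_congr; intro y
        apply and_congr_right; intro _
        apply and_congr_right; intro hy
        apply and_congr_right; intro _
        apply and_congr (ih y hy b hb)
        apply forall_congr'; intro z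
        apply imp_congr_right; intro hz
        rw [ih y hy z (by omega), ih z (by omega) b hb]
      have hsub : ∀ b ∈ sS n w p v, b < v := by intro b hb; simp [sS] at hb; exact hb.1
      have hc : (sU n w p v).card = (sU n w' p' v).card := by
        rw [card_sU H (by omega), card_sU H' (by omega), hT, hE v (by omega)]
      have hU : sU n w p v = sU n w' p' v := by
        by_cases hs : sU n w p v ⊆ sU n w' p' v
        · exact Finset.eq_of_subset_of_card_le hs hc.ge
        · symm
          apply Finset.eq_of_subset_of_card_le _ hc.le
          rw [Finset.not_subset] at hs
          obtain ⟨b, hb, hb'⟩ := hs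
          intro d hd
          simp only [sU, mem_filter] at hb hb' hd ⊢
          rw [← hS] at hb' hd
          refine ⟨hd.1, ?_⟩
          have h1 : p' b < p' d := by
            have : ¬ p' v < p' b := fun h => hb' ⟨hb.1, h⟩
            omega
          have := (ih b (hsub b hb.1) d (hsub d hd.1)).2 h1
          omega
      have hv1 : ∀ x < v, (p v < p x ↔ p' v < p' x) := by
        intro x hx
        rw [before_iff H (by omega) hx, before_iff H' (by omega) hx, hU]
        apply exists_congr; intro b
        apply and_congr_right; intro hb
        have hb1 : b < v := by simp [sU, sS] at hb; exact hb.1.1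
        rw [← not_lt, ← not_lt, ih x hx b hb1]
      intro x hx y hy
      rcases Nat.lt_succ_iff_lt_or_eq.1 hx with hx | rfl <;>
        rcases Nat.lt_succ_iff_lt_or_eq.1 hy with hy | rfl
      · exact ih x hx y hy
      · have h1 := hv1 x hx
        have h2 : p x ≠ p y := fun h => by have := pinj H (by omega) (by omega) h; omega
        have h3 : p' x ≠ p' y := fun h => by have := pinj H' (by omega) (by omega) h; omega
        omega
      · exact hv1 y hy
      · simp
  have hcount : ∀ {w p : ℕ → ℕ}, IsWord n w p → ∀ v < n,
      ((range n).filter (fun x => p x < p v)).card = p v := by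
    intro w p H v hv
    rw [← Finset.card_range (p v)]
    apply Finset.card_bij (fun x _ => p x)
    · intro x hx; simp at hx ⊢; exact hx.2
    · intro x hx y hy h; simp at hx hy; exact pinj H hx.1 hy.1 h
    · intro i hi
      have := H.plt v hv
      simp at hi
      exact ⟨w i, by simp [H.pw i (by omega), hi, H.wlt i (by omega)], H.pw i (by omega)⟩
  have hp : ∀ v < n, p v = p' v := by
    intro v hv
    rw [← hcount H v hv, ← hcount H' v hv]
    congr 1
    apply Finset.filter_congr
    intro x hx
    exact key n le_rfl x (by simpa using hx) v hv
  intro i hi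
  have h1 := H.wlt i hi
  rw [← H'.wp (w i) h1, ← hp _ h1, H.pw i hi]

theorem exists_sigma {n w p} (hn : 1 ≤ n) (H : IsWord n w p) :
    ∃ σ : ℕ → ℕ, (∀ v < n, σ v < n) ∧ Set.InjOn σ (range n) ∧
      (∀ v < n, σ v ≤ v ↔ v ∈ insert (n-1) ((dT n w).image (· - 1))) ∧
      (∀ v < n, σ v ≤ v ↔ σ v ∈ insert 0 ((dB n w).image (· + 1))) ∧
      ∀ v < n, ((range n).filter (fun x => v < x ∧ σ v < σ x ∧ σ x ≤ v)).card +
        ((range n).filter (fun x => x < v ∧ σ x < σ v ∧ v < σ x)).card = emb n w p v := by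
  set F := insert (n-1) ((dT n w).image (· - 1)) with hF
  set E := insert 0 ((dB n w).image (· + 1)) with hE
  have hTn : ∀ t ∈ dT n w, 0 < t ∧ t < n := by
    intro t ht
    simp only [dT, dD, mem_image, mem_filter, mem_range] at ht
    obtain ⟨i, ⟨h1, h2, h3⟩, rfl⟩ := ht
    exact ⟨by omega, H.wlt i h1⟩
  have hBn : ∀ b ∈ dB n w, b + 1 < n := by
    intro t ht
    simp only [dB, dD, mem_image, mem_filter, mem_range] at ht
    obtain ⟨i, ⟨h1, h2, h3⟩, rfl⟩ := ht
    have := H.wlt i h1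
    omega
  have hEn : E ⊆ range n := by
    intro x hx
    simp only [hE, mem_insert, mem_image] at hx
    rw [mem_range]
    rcases hx with rfl | ⟨b, hb, rfl⟩
    · omega
    · exact hBn b hb
  have hFn : F ⊆ range n := by
    intro x hx
    simp only [hF, mem_insert, mem_image] at hx
    rw [mem_range]
    rcases hx with rfl | ⟨b, hb, rfl⟩
    · omega
    · have := hTn b hb; omega
  have hcE : E.card = (dD n w).card + 1 := by
    rw [hE, Finset.card_insert_of_notMem (by simp), Finset.card_image_of_injective _ (add_left_injective 1)]
    have := card_B H (fun _ => True)
    simpa using this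
  have injT : Set.InjOn (fun x : ℕ => x - 1) (dT n w) := by
    intro x hx y hy h
    have := hTn x hx; have := hTn y hy; simp at h; omega
  have hcF : F.card = (dD n w).card + 1 := by
    rw [hF, Finset.card_insert_of_notMem, Finset.card_image_of_injOn injT]
    · have := card_T H (fun _ => True)
      simpa using this
    · simp only [mem_image, not_exists, not_and]
      intro x hx; have := hTn x hx; omega
  have hE1 : ∀ v, (E.filter (fun x => x ≤ v)).card = ((dB n w).filter (fun x => x < v)).card + 1 := by
    intro v
    rw [hE, Finset.filter_insert, if_pos (by omega), Finset.card_insert_of_notMem (by simp),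
      Finset.filter_image, Finset.card_image_of_injective _ (add_left_injective 1)]
    rfl
  have hF1 : ∀ v < n, (F.filter (fun x => x < v)).card = ((dT n w).filter (fun x => x ≤ v)).card := by
    intro v hv
    rw [hF, Finset.filter_insert, if_neg (by omega),
      Finset.filter_image, Finset.card_image_of_injOn (injT.mono (by intro x; simp; tauto))]
    congr 1
    apply Finset.filter_congr
    intro x hx; have := hTn x hx; omega
  have hkey : ∀ v < n, emb n w p v + (F.filter (fun x => x < v)).card < (E.filter (fun x => x ≤ v)).card := by
    intro v hv
    rw [hE1, hF1 v hv]
    have := emb_bound H v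
    omega
  obtain ⟨σ1, a1, b1, c1⟩ := matchE (emb n w p) F E (by omega) (fun q hq => hkey q (by simpa using hFn hq))
  have hcompl : ∀ A ⊆ range n, ∀ v < n, ((range n \ A).filter (fun x => v < x)).card +
      A.card = (n - 1 - v) + (A.filter (fun x => x ≤ v)).card := by
    intro A hA v hv
    have e1 : ((range n).filter (fun x => v < x)).card = n - 1 - v := by
      have : (range n).filter (fun x => v < x) = Finset.Ioo v n := by
        ext x; simp; tauto
      rw [this, Nat.card_Ioo]; omega
    have e2 : ((range n).filter (fun x => v < x)).card =
        ((range n \ A).filter (fun x => v < x)).card + (A.filter (fun x => v < x)).card := by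
      rw [← Finset.card_union_of_disjoint]
      · congr 1
        ext x
        have := @hA x
        simp at this ⊢
        tauto
      · rw [Finset.disjoint_left]; intro x; simp; tauto
    have e3 := Finset.card_filter_add_card_filter_not (s := A) (fun x => x ≤ v)
    simp only [not_le] at e3
    omega
  obtain ⟨σ2, a2, b2, c2⟩ := matchN (emb n w p) (range n \ F) (range n \ E)
    (by rw [Finset.card_sdiff_of_subset hEn, Finset.card_sdiff_of_subset hFn]; omega)
    (by
      intro v hv
      simp only [mem_sdiff, mem_range] at hv
      have h1 := hcompl F hFn v hv.1
      have h2 := hcompl E hEn v hv.1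
      have h3 := hkey v hv.1
      have h4 : F.filter (fun x => x ≤ v) = F.filter (fun x => x < v) := by
        apply Finset.filter_congr
        intro x hx
        have : x ≠ v := by rintro rfl; exact hv.2 hx
        omega
      rw [h4] at h1
      omega)
  simp only [mem_sdiff, mem_range] at a2 c2
  have hFlt : ∀ v ∈ F, v < n := fun v hv => by simpa using hFn hv
  have hElt : ∀ v ∈ E, v < n := fun v hv => by simpa using hEn hv
  have s1 : ∀ v ∈ F, (if v ∈ F then σ1 v else σ2 v) = σ1 v := fun v hv => if_pos hv
  have s2 : ∀ v, v ∉ F → (if v ∈ F then σ1 v else σ2 v) = σ2 v := fun v hv => if_neg hv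
  refine ⟨fun v => if v ∈ F then σ1 v else σ2 v, ?_, ?_, ?_, ?_, ?_⟩
  · intro v hv
    beta_reduce
    split_ifs with h
    · exact hElt _ (a1 v h).1
    · exact (a2 v ⟨hv, h⟩).1.1
  · intro x hx y hy h
    simp only [coe_range, Set.mem_Iio] at hx hy
    beta_reduce at h
    split_ifs at h with h1 h2 h2
    · exact b1 h1 h2 h
    · exact absurd (h ▸ (a1 x h1).1) (a2 y ⟨hy, h2⟩).1.2
    · exact absurd (h ▸ (a1 y h2).1) (a2 x ⟨hx, h1⟩).1.2
    · exact b2 (by simp [hx, h1]) (by simp [hy, h2]) h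
  · intro v hv
    beta_reduce
    split_ifs with h
    · simp [h, (a1 v h).2]
    · simp [h, (a2 v ⟨hv, h⟩).2]
  · intro v hv
    beta_reduce
    split_ifs with h
    · simp [a1 v h]
    · simp [a2 v ⟨hv, h⟩]
  · intro v hv
    beta_reduce
    by_cases h : v ∈ F
    · rw [s1 v h, ← c1 v h]
      have z : (range n).filter (fun x => x < v ∧ (if x ∈ F then σ1 x else σ2 x) < σ1 v ∧
          v < if x ∈ F then σ1 x else σ2 x) = ∅ := by
        rw [Finset.filter_eq_empty_iff]
        intro x _
        have := a1 v h
        omega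
      rw [z, Finset.card_empty, add_zero]
      congr 1
      ext x
      simp only [mem_filter, mem_range]
      by_cases hx : x ∈ F
      · simp [hx, hFlt x hx]
      · simp only [hx, if_false, false_and, iff_false]
        rintro ⟨h1, h2, h3, h4⟩
        have := (a2 x ⟨h1, hx⟩).2
        omega
    · rw [s2 v h, ← c2 v ⟨hv, h⟩]
      have z : (range n).filter (fun x => v < x ∧ σ2 v < (if x ∈ F then σ1 x else σ2 x) ∧
          (if x ∈ F then σ1 x else σ2 x) ≤ v) = ∅ := by
        rw [Finset.filter_eq_empty_iff]
        intro x _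
        have := a2 v ⟨hv, h⟩
        omega
      rw [z, Finset.card_empty, zero_add]
      congr 1
      ext x
      simp only [mem_filter, mem_range, mem_sdiff]
      by_cases hx : x ∈ F
      · simp only [hx, if_true, not_true, and_false, false_and, iff_false]
        rintro ⟨h1, h2, h3, h4⟩
        have := (a1 x hx).2
        omega
      · simp [hx]

/-- the word of a permutation -/
def wd {n : ℕ} (π : Equiv.Perm (Fin n)) (i : ℕ) : ℕ := if h : i < n then (π ⟨i, h⟩).val else 0

theorem wd_val {n : ℕ} (π : Equiv.Perm (Fin n)) (i : Fin n) : wd π i.val = (π i).val := by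
  simp [wd]

theorem wd_lt {n : ℕ} (π : Equiv.Perm (Fin n)) {i : ℕ} (h : i < n) : wd π i = (π ⟨i, h⟩).val := by
  simp [wd, h]

theorem isWord_wd {n : ℕ} (π : Equiv.Perm (Fin n)) : IsWord n (wd π) (wd π.symm) where
  wlt i hi := by rw [wd_lt π hi]; exact Fin.is_lt _
  plt i hi := by rw [wd_lt _ hi]; exact Fin.is_lt _
  pw i hi := by rw [wd_lt π hi, wd_val]; simp
  wp i hi := by rw [wd_lt _ hi, wd_val]; simp

theorem desbots_eq {n : ℕ} (π : Equiv.Perm (Fin n)) : desbotsSet π = (dB n (wd π)).image (· + 1) := by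
  ext x
  simp only [desbotsSet, descents, dB, dD, mem_image, mem_filter, mem_univ, true_and, mem_range]
  constructor
  · rintro ⟨i, ⟨h, h2⟩, rfl⟩
    refine ⟨_, ⟨i.val, ⟨i.is_lt, h, ?_⟩, rfl⟩, ?_⟩
    · rw [wd_lt π h, wd_val]; exact h2
    · rw [wd_lt π h, dif_pos h]
  · rintro ⟨_, ⟨i, ⟨h1, h, h2⟩, rfl⟩, rfl⟩
    rw [wd_lt π h, wd_lt π h1] at h2
    refine ⟨⟨i, h1⟩, ⟨h, h2⟩, ?_⟩
    rw [dif_pos h, wd_lt π h]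

theorem destops_eq {n : ℕ} (π : Equiv.Perm (Fin n)) : destopsSet π = (dT n (wd π)).image (· + 1) := by
  ext x
  simp only [destopsSet, descents, dT, dD, mem_image, mem_filter, mem_univ, true_and, mem_range]
  constructor
  · rintro ⟨i, ⟨h, h2⟩, rfl⟩
    refine ⟨_, ⟨i.val, ⟨i.is_lt, h, ?_⟩, rfl⟩, ?_⟩
    · rw [wd_lt π h, wd_val]; exact h2
    · rw [wd_val]
  · rintro ⟨_, ⟨i, ⟨h1, h, h2⟩, rfl⟩, rfl⟩
    rw [wd_lt π h, wd_lt π h1] at h2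
    refine ⟨⟨i, h1⟩, ⟨h, h2⟩, ?_⟩
    rw [wd_lt π h1]

theorem P2d31_eq {n : ℕ} (π : Equiv.Perm (Fin n)) :
    P2d31 π = ∑ v ∈ range n, emb n (wd π) (wd π.symm) v := by
  have H := isWord_wd π
  simp only [emb]
  rw [← Finset.card_sigma, P2d31]
  apply Finset.card_bij (fun (a : Fin n × Fin n) _ => (⟨(π a.1).val, a.2.val⟩ : Σ _ : ℕ, ℕ))
  · rintro ⟨a, b⟩ h
    simp only [mem_filter, mem_univ, true_and] at h
    obtain ⟨h1, h, h2, h3⟩ := h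
    simp only [mem_sigma, mem_filter, mem_range]
    refine ⟨Fin.is_lt _, b.is_lt, h, ?_, ?_, ?_⟩
    · rw [wd_val]; simpa using h1
    · rw [wd_lt π h]; exact h2
    · rw [wd_val]; exact h3
  · rintro ⟨a, b⟩ _ ⟨a', b'⟩ _ h
    simp only [Sigma.mk.injEq, heq_eq_eq] at h
    have h1 := π.injective (Fin.ext h.1)
    have h2 := Fin.ext h.2
    simp [h1, h2]
  · rintro ⟨v, q⟩ h
    simp only [mem_sigma, mem_filter, mem_range] at h
    obtain ⟨h0, h1, h2, h3, h4, h5⟩ := h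
    refine ⟨(π.symm ⟨v, h0⟩, ⟨q, h1⟩), ?_, by simp⟩
    simp only [mem_filter, mem_univ, true_and]
    rw [wd_lt _ h0] at h3
    rw [wd_lt _ h2] at h4
    rw [wd_lt _ h1] at h5
    refine ⟨h3, h2, ?_, ?_⟩
    · rw [Equiv.apply_symm_apply]; exact h4
    · rw [Equiv.apply_symm_apply]; exact h5

def cd (n : ℕ) (σ : ℕ → ℕ) (v : ℕ) : ℕ :=
  ((range n).filter (fun x => v < x ∧ σ v < σ x ∧ σ x ≤ v)).card +
        ((range n).filter (fun x => x < v ∧ σ x < σ v ∧ v < σ x)).card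

theorem C_eq {n : ℕ} (τ : Equiv.Perm (Fin n)) :
    CEE τ + CNN τ = ∑ v ∈ range n, cd n (wd τ.symm) v := by
  simp only [cd]
  rw [Finset.sum_add_distrib, ← Finset.card_sigma, ← Finset.card_sigma, CEE, CNN]
  congr 1
  · apply Finset.card_bij (fun (a : Fin n × Fin n) _ => (⟨(τ a.2).val, (τ a.1).val⟩ : Σ _ : ℕ, ℕ))
    · rintro ⟨a, b⟩ h
      simp only [mem_filter, mem_univ, true_and] at h
      obtain ⟨h1, h2, h3⟩ := h
      simp only [mem_sigma, mem_filter, mem_range, wd_val, Equiv.symm_apply_apply]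
      exact ⟨Fin.is_lt _, Fin.is_lt _, h3, h1, h2⟩
    · rintro ⟨a, b⟩ _ ⟨a', b'⟩ _ h
      simp only [Sigma.mk.injEq, heq_eq_eq] at h
      have h1 := τ.injective (Fin.ext h.1)
      have h2 := τ.injective (Fin.ext h.2)
      simp [h1, h2]
    · rintro ⟨v, q⟩ h
      simp only [mem_sigma, mem_filter, mem_range] at h
      obtain ⟨h0, h1, h2, h3, h4⟩ := h
      refine ⟨(τ.symm ⟨q, h1⟩, τ.symm ⟨v, h0⟩), ?_, by simp⟩
      simp only [mem_filter, mem_univ, true_and, Equiv.apply_symm_apply]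
      rw [wd_lt _ h0, wd_lt _ h1] at h3
      rw [wd_lt _ h1] at h4
      exact ⟨h3, h4, h2⟩
  · apply Finset.card_bij (fun (a : Fin n × Fin n) _ => (⟨(τ a.2).val, (τ a.1).val⟩ : Σ _ : ℕ, ℕ))
    · rintro ⟨a, b⟩ h
      simp only [mem_filter, mem_univ, true_and] at h
      obtain ⟨h1, h2, h3⟩ := h
      simp only [mem_sigma, mem_filter, mem_range, wd_val, Equiv.symm_apply_apply]
      exact ⟨Fin.is_lt _, Fin.is_lt _, h1, h3, h2⟩
    · rintro ⟨a, b⟩ _ ⟨a', b'⟩ _ h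
      simp only [Sigma.mk.injEq, heq_eq_eq] at h
      have h1 := τ.injective (Fin.ext h.1)
      have h2 := τ.injective (Fin.ext h.2)
      simp [h1, h2]
    · rintro ⟨v, q⟩ h
      simp only [mem_sigma, mem_filter, mem_range] at h
      obtain ⟨h0, h1, h2, h3, h4⟩ := h
      refine ⟨(τ.symm ⟨q, h1⟩, τ.symm ⟨v, h0⟩), ?_, by simp⟩
      simp only [mem_filter, mem_univ, true_and, Equiv.apply_symm_apply]
      rw [wd_lt _ h0, wd_lt _ h1] at h3
      rw [wd_lt _ h1] at h4
      exact ⟨h2, h4, h3⟩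

theorem dT_pos {n w p} (H : IsWord n w p) : ∀ t ∈ dT n w, 0 < t ∧ t < n := by
  intro t ht
  simp only [dT, dD, mem_image, mem_filter, mem_range] at ht
  obtain ⟨i, ⟨h1, h2, h3⟩, rfl⟩ := ht
  exact ⟨by omega, H.wlt i h1⟩

theorem exists_tau {n : ℕ} (hn : 1 ≤ n) (π : Equiv.Perm (Fin n)) :
    ∃ τ : Equiv.Perm (Fin n), wexbotsSet τ = insert 1 ((desbotsSet π).image (· + 1)) ∧
        wextopsSet τ = insert n ((destopsSet π).image (· - 1)) ∧
        ∀ v < n, cd n (wd τ.symm) v = emb n (wd π) (wd π.symm) v := by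
  obtain ⟨σ, h1, h2, h3, h4, h5⟩ := exists_sigma hn (isWord_wd π)
  let s : Fin n → Fin n := fun v => ⟨σ v, h1 v v.is_lt⟩
  have hs : Function.Injective s := by
    intro x y h
    simp only [s, Fin.mk.injEq] at h
    exact Fin.ext (h2 (by simp) (by simp) h)
  let e : Equiv.Perm (Fin n) := Equiv.ofBijective s (Finite.injective_iff_bijective.1 hs)
  have he : ∀ v : Fin n, (e v).val = σ v := fun v => rfl
  have hwd : ∀ v < n, wd e v = σ v := by
    intro v hv; rw [wd_lt _ hv, he]
  refine ⟨e.symm, ?_, ?_, ?_⟩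
  · ext x
    rw [desbots_eq]
    simp only [wexbotsSet, wexB, mem_image, mem_filter, mem_univ, true_and]
    have : insert 1 (((dB n (wd π)).image (· + 1)).image (· + 1)) =
      (insert 0 ((dB n (wd π)).image (· + 1))).image (· + 1) := by simp [Finset.image_insert]
    rw [this, mem_image]
    constructor
    · rintro ⟨i, hi, rfl⟩
      refine ⟨i.val, ?_, rfl⟩
      have := h4 (e.symm i).val (Fin.is_lt _)
      rw [← he, Equiv.apply_symm_apply] at this
      exact this.1 hi
    · rintro ⟨i, hi, rfl⟩
      have hin : i < n := by
        simp only [mem_insert, mem_image, dB, dD, mem_filter, mem_range] at hi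
        rcases hi with rfl | ⟨_, ⟨j, ⟨a, b, c⟩, rfl⟩, rfl⟩
        · omega
        · have := (isWord_wd π).wlt j a; omega
      refine ⟨⟨i, hin⟩, ?_, rfl⟩
      have := h4 (e.symm ⟨i, hin⟩).val (Fin.is_lt _)
      rw [← he, Equiv.apply_symm_apply] at this
      exact this.2 hi
  · ext x
    rw [destops_eq]
    simp only [wextopsSet, wexB, mem_image, mem_filter, mem_univ, true_and]
    have : insert n (((dT n (wd π)).image (· + 1)).image (· - 1)) =
      (insert (n-1) ((dT n (wd π)).image (· - 1))).image (· + 1) := by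
      rw [Finset.image_insert, Finset.image_image, Finset.image_image]
      congr 1
      · omega
      · apply Finset.image_congr
        intro t ht
        have := dT_pos (isWord_wd π) t ht
        simp; omega
    rw [this, mem_image]
    constructor
    · rintro ⟨i, hi, rfl⟩
      refine ⟨(e.symm i).val, ?_, rfl⟩
      have := h3 (e.symm i).val (Fin.is_lt _)
      rw [← he, Equiv.apply_symm_apply] at this
      exact this.1 hi
    · rintro ⟨i, hi, rfl⟩
      have hin : i < n := by
        simp only [mem_insert, mem_image] at hi
        rcases hi with rfl | ⟨t, ht, rfl⟩
        · omega
        · have := dT_pos (isWord_wd π) t ht; omega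
      refine ⟨e ⟨i, hin⟩, ?_, by simp⟩
      have := (h3 i hin).2 hi
      rw [Equiv.symm_apply_apply]
      exact this
  · intro v hv
    rw [← h5 v hv, cd, Equiv.symm_symm, hwd v hv]
    congr 2
    · apply Finset.filter_congr
      intro x hx
      rw [hwd x (by simpa using hx)]
    · apply Finset.filter_congr
      intro x hx
      rw [hwd x (by simpa using hx)]

theorem exists_Psi (n : ℕ) (hn : 1 ≤ n) :
    ∃ Ψ : Equiv.Perm (Fin n) → Equiv.Perm (Fin n), Function.Bijective Ψ ∧
      ∀ π : Equiv.Perm (Fin n),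
        wexbotsSet (Ψ π) = insert 1 ((desbotsSet π).image (· + 1)) ∧
        wextopsSet (Ψ π) = insert n ((destopsSet π).image (· - 1)) ∧
        CEE (Ψ π) + CNN (Ψ π) = P2d31 π := by
  choose Ψ hb ht hc using fun π => exists_tau hn π
  refine ⟨Ψ, Finite.injective_iff_bijective.1 ?_, fun π => ⟨hb π, ht π, ?_⟩⟩
  · intro π π' h
    have hB : dB n (wd π) = dB n (wd π') := by
      have h1 := hb π
      rw [h, hb π', desbots_eq, desbots_eq, Finset.image_image, Finset.image_image] at h1
      have hz : ∀ ρ : Equiv.Perm (Fin n),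
          1 ∉ (dB n (wd ρ)).image ((fun x => x + 1) ∘ (fun x => x + 1)) := by
        intro ρ; simp
      have h2 := congrArg (fun s => s.erase 1) h1
      simp only [Finset.erase_insert (hz _)] at h2
      refine (Finset.image_injective ?_ h2).symm
      intro x y; simp
    have hT : dT n (wd π) = dT n (wd π') := by
      have h1 := ht π
      have hid : ∀ ρ : Equiv.Perm (Fin n),
          ((dT n (wd ρ)).image (· + 1)).image (· - 1) = dT n (wd ρ) := by
        intro ρ; rw [Finset.image_image]; ext x; simp
      rw [h, ht π', destops_eq, destops_eq, hid, hid] at h1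
      have hz : ∀ ρ : Equiv.Perm (Fin n), n ∉ dT n (wd ρ) := by
        intro ρ hh
        exact lt_irrefl _ (dT_pos (isWord_wd ρ) n hh).2
      have h2 := congrArg (fun s => s.erase n) h1
      simp only [Finset.erase_insert (hz _)] at h2
      exact h2.symm
    have hw := word_unique (isWord_wd π) (isWord_wd π') hB hT (by
      intro v hv
      rw [← hc π v hv, ← hc π' v hv, h])
    ext i
    rw [← wd_val, ← wd_val]
    exact hw i i.is_lt
  · rw [C_eq, P2d31_eq]
    apply Finset.sum_congr rfl
    intro v hv
    exact hc π v (by simpa using hv)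
end

section
/- The number of permutations of {1,...,n} with k-1 descents and m occurrences of the generalized pattern (2-31) equals the coefficient of q^m in q^{-k²} · Σ_{i=0}^{k-1} (-1)^i [k-i]_q^n q^{ki} (C(n,i) q^{k-i} + C(n,i-1)), where [j]_q = 1 + q + ... + q^{j-1}. -/
open Finset


section Alg
variable {S : Type*} [CommRing S]

/-- q-integer -/
def br (q : S) (n : ℕ) : S := ∑ t ∈ range n, q ^ t

lemma br_zero (q : S) : br q 0 = 0 := by simp [br]
lemma br_succ (q : S) (n : ℕ) : br q (n+1) = br q n + q ^ n := by simp [br, sum_range_succ]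
lemma br_succ' (q : S) (n : ℕ) : br q (n+1) = 1 + q * br q n := by
  simp [br, sum_range_succ', mul_sum, pow_succ', add_comm]
lemma br_add (q : S) (a b : ℕ) : br q (a+b) = br q a + q ^ a * br q b := by
  simp [br, sum_range_add, mul_sum, pow_add]
lemma br_mul (q : S) (a : ℕ) : br q a * (q - 1) = q ^ a - 1 := by
  simp only [br]; exact geom_sum_mul q a

def opE (q : S) : Module.End S (ℕ → S) where
  toFun f h := br q (h+1) * f h + br q h * f (h-1)
  map_add' f g := by ext h; simp; ring
  map_smul' c f := by ext h; simp; ring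

def opD (q : S) : Module.End S (ℕ → S) where
  toFun f h := br q h * f h + br q (h+1) * f (h+1)
  map_add' f g := by ext h; simp; ring
  map_smul' c f := by ext h; simp; ring

def opB : Module.End S (ℕ → S) where
  toFun f h := f (h+1)
  map_add' f g := by ext h; simp
  map_smul' c f := by ext h; simp

lemma opE_apply (q : S) (f : ℕ → S) (h : ℕ) :
    opE q f h = br q (h+1) * f h + br q h * f (h-1) := rfl
lemma opD_apply (q : S) (f : ℕ → S) (h : ℕ) :
    opD q f h = br q h * f h + br q (h+1) * f (h+1) := rfl
lemma opB_apply (f : ℕ → S) (h : ℕ) : opB f h = f (h+1) := rfl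

def opT (q y : S) : Module.End S (ℕ → S) := opE q + y • opD q
def opX (y : S) : Module.End S (ℕ → S) := 1 + y • opB
def opT' (q y : S) : Module.End S (ℕ → S) := opT q y - opX y

def vac : ℕ → S := fun h => if h = 0 then 1 else 0

lemma comm_BT (q y : S) (f : ℕ → S) :
    opB (opT' q y f) = opX y f + q • opT q y (opB f) := by
  ext h
  cases h with
  | zero =>
    simp [opT', opT, opX, opE_apply, opD_apply, opB_apply, br_succ', br_zero]
    ring
  | succ h =>
    simp [opT', opT, opX, opE_apply, opD_apply, opB_apply]
    simp only [br_succ']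
    ring

lemma comm_DE (q : S) (f : ℕ → S) :
    opD q (opE q f) = q • opE q (opD q f) + opD q f + opE q f := by
  ext h
  cases h with
  | zero =>
    simp [opE_apply, opD_apply, br_succ', br_zero]
    ring
  | succ h =>
    simp [opE_apply, opD_apply]
    simp only [br_succ']
    ring

lemma opB_vac : opB (vac : ℕ → S) = 0 := by
  ext h; simp [opB_apply, vac]

lemma opD_vac (q : S) : opD q (vac : ℕ → S) = 0 := by
  ext h; cases h <;> simp [opD_apply, vac, br_zero]

lemma opT'_zero (q y : S) (f : ℕ → S) : opT' q y f 0 = 0 := by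
  simp [opT', opT, opX, opE_apply, opD_apply, opB_apply, br_succ', br_zero]

/-- eigenvectors of D -/
def uvec (q : S) : ℕ → (ℕ → S)
  | 0 => vac
  | K+1 => q ^ K • opE q (uvec q K) + br q K • uvec q K

lemma opD_uvec (q : S) (K : ℕ) : opD q (uvec q K) = br q K • uvec q K := by
  induction K with
  | zero => simp [uvec, opD_vac, br_zero]
  | succ K ih =>
    simp only [uvec, map_add, map_smul, comm_DE, ih, smul_add, smul_smul]
    have h := br_succ q K
    have h' := br_succ' q K
    ext i
    simp only [Pi.add_apply, Pi.smul_apply, smul_eq_mul]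
    have h2 : q * br q K = br q K + q ^ K - 1 := by linear_combination h - h'
    rw [h]
    linear_combination (q ^ K * (opE q (uvec q K)) i) * h2

lemma uvec_succ (q y : S) (K : ℕ) :
    uvec q (K+1) = q ^ K • opT q y (uvec q K) + (br q K - y * q ^ K * br q K) • uvec q K := by
  simp only [uvec, opT, LinearMap.add_apply, LinearMap.smul_apply, opD_uvec]
  ext i
  simp
  ring

lemma uvec_zero (q : S) (K : ℕ) : uvec q K 0 = ∏ i ∈ range K, br q (i+1) := by
  induction K with
  | zero => simp [uvec, vac]
  | succ K ih =>
    rw [prod_range_succ, ← ih]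
    simp [uvec, opE_apply, br_zero, br_succ]
    ring

def rr (q y : S) (n K : ℕ) : S := ((opT q y) ^ n) (uvec q K) 0

lemma rr_succ (q y : S) (n K : ℕ) :
    rr q y n (K+1) = q ^ K * rr q y (n+1) K + (br q K - y * q ^ K * br q K) * rr q y n K := by
  unfold rr
  rw [uvec_succ q y, pow_succ]
  simp

/-- spectral side; `J` stands for `j = J+1` -/
def aa (q p y : S) (j : ℕ) : S := y ^ j * q ^ j * p ^ (j * j)
def lam (q p y : S) (j : ℕ) : S := br q j * (1 - y * p ^ j)
def PB (q : S) (j K : ℕ) : S := ∏ i ∈ range K, br q (j + i)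
def PY (q p y : S) (j K : ℕ) : S := ∏ i ∈ range K, (1 - y * q ^ i * p ^ j)
def Phi (q p y : S) (K j : ℕ) : S := PB q j K * PY q p y j K
def mu (q p y : S) (j : ℕ) : S := aa q p y j - aa q p y (j+1)

lemma PB_succ (q : S) (j K : ℕ) : PB q j (K+1) = PB q j K * br q (j+K) := by
  simp [PB, prod_range_succ]
lemma PB_succ' (q : S) (j K : ℕ) : PB q j (K+1) = PB q (j+1) K * br q j := by
  simp only [PB, prod_range_succ', Nat.add_zero]
  congr 1
  apply prod_congr rfl; intros; congr 1; omega
lemma PY_succ (q p y : S) (j K : ℕ) :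
    PY q p y j (K+1) = PY q p y j K * (1 - y * q ^ K * p ^ j) := by
  simp [PY, prod_range_succ]
lemma PY_succ' (q p y : S) (hp : p * q = 1) (j K : ℕ) :
    PY q p y (j+1) (K+1) = PY q p y j K * (1 - y * p ^ (j+1)) := by
  simp only [PY, prod_range_succ', pow_zero, mul_one]
  congr 1
  apply prod_congr rfl; intro i _
  have : q ^ (i+1) * p ^ (j+1) = q ^ i * p ^ j := by
    rw [pow_succ, pow_succ]; linear_combination q ^ i * p ^ j * hp
  linear_combination -y * this

lemma pq_pow {q p : S} (hp : p * q = 1) (j : ℕ) : p ^ j * q ^ j = 1 := by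
  rw [← mul_pow, hp, one_pow]

lemma aa_succ (q p y : S) (hp : p * q = 1) (j : ℕ) :
    aa q p y (j+1) = aa q p y j * (y * (p ^ j * p ^ j)) := by
  unfold aa
  have : (j+1)*(j+1) = j*j + j + j + 1 := by ring
  rw [this]
  simp only [pow_add, pow_one]
  linear_combination (y ^ j * y * q ^ j * p ^ (j*j) * p ^ j * p ^ j) * hp

lemma Phi_succ (q p y : S) (hp : p * q = 1) (K j : ℕ) :
    Phi q p y (K+1) j =
      q ^ K * (lam q p y j * Phi q p y K j) +
        (br q K - y * q ^ K * br q K) * Phi q p y K j := by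
  unfold Phi
  rw [PB_succ, PY_succ]
  have h1 := br_add q j K
  have h2 := br_add q K j
  rw [add_comm K j] at h2
  have h3 := pq_pow hp j
  unfold lam
  have key : br q (j+K) * (1 - y * q ^ K * p ^ j) =
      q ^ K * (br q j * (1 - y * p ^ j)) + (br q K - y * q ^ K * br q K) := by
    linear_combination h2 - y * q ^ K * p ^ j * h1 - y * q ^ K * br q K * h3
  linear_combination PB q j K * PY q p y j K * key

def CC (q p y : S) (K J : ℕ) : S :=
  q ^ (K+1) * aa q p y (J+1) * PB q J (K+1) * PY q p y (J+1) (K+1)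

lemma tele (q p y : S) (hp : p * q = 1) (K J : ℕ) :
    mu q p y (J+1) * (Phi q p y (K+1) (J+1) - br q (K+1) * Phi q p y K (J+1)) =
      CC q p y K J - CC q p y K (J+1) := by
  unfold CC mu Phi
  rw [aa_succ q p y hp (J+1), PY_succ' q p y hp (J+1) K, PB_succ' q J K, PB_succ q (J+1) K,
    PY_succ q p y (J+1) K]
  have e1 : br q (J+1+K) = br q (K+1) + q ^ (K+1) * br q J := by
    rw [← br_add]; congr 1; omega
  rw [e1]
  have e2 : br q (K+1) * (q ^ J - 1) = br q J * (q ^ (K+1) - 1) := by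
    rw [← br_mul, ← br_mul]; ring
  have e3 := pq_pow hp (J+1)
  have e4 : p ^ (J+1) * q ^ J = p := by
    have := pq_pow hp J
    rw [pow_succ]; linear_combination p * this
  have e5 : p ^ (J+1+1) * q = p ^ (J+1) := by
    rw [pow_succ _ (J+1)]; linear_combination p ^ (J+1) * hp
  generalize br q (K+1) = bK at *
  generalize br q J = bJ at *
  generalize aa q p y (J+1) = A at *
  generalize PB q (J+1) K = B at *
  generalize PY q p y (J+1) K = Y at *
  linear_combination A * B * Y * (-(y * p ^ (J+1) * q ^ K) * (q * p ^ (J+1) * e2 - bK * e3)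
    - y ^ 2 * (bK + q ^ (K+1) * bJ) * q ^ K * p ^ (J+1) * p ^ (J+1) * e5)

def ss (q p y : S) (N n K : ℕ) : S :=
  ∑ J ∈ range N, lam q p y (J+1) ^ n * mu q p y (J+1) * Phi q p y K (J+1)

lemma ss_succ (q p y : S) (hp : p * q = 1) (N n K : ℕ) :
    ss q p y N n (K+1) = q ^ K * ss q p y N (n+1) K +
      (br q K - y * q ^ K * br q K) * ss q p y N n K := by
  unfold ss
  rw [mul_sum, mul_sum, ← sum_add_distrib]
  apply sum_congr rfl; intro J _
  rw [Phi_succ q p y hp]; ring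

lemma ss_base (q p y : S) (hp : p * q = 1) (N K : ℕ) :
    y ^ (N+1) ∣ y * rr q y 0 K - ss q p y N 0 K := by
  have hr : rr q y 0 K = ∏ i ∈ range K, br q (i+1) := by simp [rr, uvec_zero]
  rw [hr]
  induction K with
  | zero =>
    have : ss q p y N 0 0 = aa q p y 1 - aa q p y (N+1) := by
      simp only [ss, Phi, PB, PY, mu, range_zero, prod_empty, pow_zero, one_mul, mul_one]
      rw [sum_range_sub' (fun J => aa q p y (J+1))]
    rw [this]
    simp only [range_zero, prod_empty, mul_one]
    have h1 : aa q p y 1 = y := by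
      simp [aa]; linear_combination y * hp
    rw [h1]
    simp only [aa]
    exact ⟨q ^ (N+1) * p ^ ((N+1)*(N+1)), by ring⟩
  | succ K ih =>
    have hr : rr q y 0 K = ∏ i ∈ range K, br q (i+1) := by simp [rr, uvec_zero]
    have ih := ih hr
    have h2 : ss q p y N 0 (K+1) - br q (K+1) * ss q p y N 0 K = CC q p y K 0 - CC q p y K N := by
      rw [← sum_range_sub' (fun J => CC q p y K J)]
      simp only [ss]
      rw [mul_sum, ← sum_sub_distrib]
      apply sum_congr rfl; intro J _
      rw [← tele q p y hp]; ring
    have h3 : CC q p y K 0 = 0 := by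
      simp [CC, PB_succ', br_zero]
    have h4 : y ^ (N+1) ∣ CC q p y K N := by
      unfold CC aa
      exact ⟨q ^ (K+1) * (q ^ (N+1) * p ^ ((N+1)*(N+1))) * PB q N (K+1) * PY q p y (N+1) (K+1),
        by ring⟩
    have h5 : y * ∏ i ∈ range (K+1), br q (i+1) - ss q p y N 0 (K+1) =
        br q (K+1) * (y * ∏ i ∈ range K, br q (i+1) - ss q p y N 0 K) + CC q p y K N := by
      rw [prod_range_succ]; linear_combination - h2 - h3
    rw [h5]
    exact dvd_add (Dvd.dvd.mul_left ih _) h4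

lemma ss_main (q p y : S) (hp : p * q = 1) (N n K : ℕ) :
    y ^ (N+1) ∣ y * rr q y n K - ss q p y N n K := by
  induction n generalizing K with
  | zero => exact ss_base q p y hp N K
  | succ n ih =>
    have h1 := rr_succ q y n K
    have h2 := ss_succ q p y hp N n K
    have h3 := pq_pow hp K
    have : y * rr q y (n+1) K - ss q p y N (n+1) K =
      p ^ K * (y * rr q y n (K+1) - ss q p y N n (K+1)) -
      p ^ K * (br q K - y * q ^ K * br q K) * (y * rr q y n K - ss q p y N n K) := by
      rw [h1, h2]
      linear_combination (-(y * rr q y (n+1) K - ss q p y N (n+1) K)) * h3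
    rw [this]
    exact dvd_sub (Dvd.dvd.mul_left (ih _) _) (Dvd.dvd.mul_left (ih _) _)

/-- The refined generating function (last letter with `b` values below, `m` values above). -/
def GG (q y : S) (b m : ℕ) : S := ((opT q y) ^ b) (opX y (((opT' q y) ^ m) vac)) 0

lemma opB_pow (q y : S) (m : ℕ) :
    opB (((opT' q y) ^ m) vac) =
      ∑ i ∈ range m, q ^ i • ((opT q y) ^ i) (opX y (((opT' q y) ^ (m-1-i)) vac)) := by
  induction m with
  | zero => simp [opB_vac]
  | succ m ih =>
    rw [pow_succ', Module.End.mul_apply, comm_BT, ih, sum_range_succ']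
    simp only [map_sum, map_smul, smul_sum, smul_smul]
    rw [add_comm]
    congr 1
    · apply sum_congr rfl; intro i _
      rw [pow_succ' q, pow_succ' (opT q y), Module.End.mul_apply]
      congr 4
      have : m + 1 - 1 - (i+1) = m - 1 - i := by omega
      rw [this]
    · simp

lemma tele_T (q y : S) (a m : ℕ) :
    ∑ i ∈ range a, GG q y i (m + (a - 1 - i)) =
      ((opT q y) ^ a) (((opT' q y) ^ m) vac) 0 - (((opT' q y) ^ (m+a)) vac) 0 := by
  induction a generalizing m with
  | zero => simp
  | succ a ih =>
    rw [sum_range_succ]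
    have h : ∑ i ∈ range a, GG q y i (m + (a+1-1-i)) =
        ∑ i ∈ range a, GG q y i ((m+1) + (a-1-i)) := by
      apply sum_congr rfl; intro i hi
      have := mem_range.1 hi
      congr 1; omega
    rw [h, ih (m+1)]
    have e : m + 1 + a = m + (a+1) := by ring
    rw [e]
    have e2 : opX y (((opT' q y) ^ m) vac) = opT q y (((opT' q y) ^ m) vac)
        - ((opT' q y) ^ (m+1)) vac := by
      rw [pow_succ' _ m, Module.End.mul_apply]
      simp [opT']
    simp only [GG, Nat.add_sub_cancel, Nat.sub_self, Nat.add_zero]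
    rw [e2, map_sub, pow_succ (opT q y) a, Module.End.mul_apply]
    simp

lemma opT'_pow_zero (q y : S) (m : ℕ) : (((opT' q y) ^ (m+1)) vac) 0 = 0 := by
  rw [pow_succ', Module.End.mul_apply, opT'_zero]

/-- recurrence for `GG`; here `b + m = n + 1`. -/
lemma GG_rec (q y : S) (n b m : ℕ) (h : b + m = n + 1) :
    GG q y b m = ∑ l ∈ range (n+1),
      (if l < b then 1 else y * q ^ (l - b)) * GG q y l (n - l) := by
  have hb : b ≤ n + 1 := by omega
  have s1 := tele_T q y b m
  rw [show m + b = n + 1 by omega, opT'_pow_zero, sub_zero] at s1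
  have e0 : GG q y b m = ((opT q y) ^ b) (((opT' q y) ^ m) vac) 0 +
      y * ((opT q y) ^ b) (opB (((opT' q y) ^ m) vac)) 0 := by
    simp [GG, opX]
  rw [e0, ← s1, opB_pow]
  rw [show n + 1 = b + m by omega, sum_range_add]
  congr 1
  · apply sum_congr rfl; intro i hi
    have := mem_range.1 hi
    rw [if_pos this, one_mul]; congr 1; omega
  · rw [map_sum, Finset.sum_apply, mul_sum]
    apply sum_congr rfl; intro i hi
    have := mem_range.1 hi
    rw [if_neg (by omega), Nat.add_sub_cancel_left]
    simp only [map_smul, Pi.smul_apply, smul_eq_mul, GG, pow_add, Module.End.mul_apply]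
    rw [show n - (b+i) = m - 1 - i by omega]
    ring

lemma GG_total (q y : S) (n : ℕ) :
    ∑ l ∈ range (n+1), GG q y l (n - l) = rr q y (n+1) 0 := by
  have s1 := tele_T q y (n+1) 0
  rw [Nat.zero_add, opT'_pow_zero, sub_zero] at s1
  simpa [rr, uvec] using s1
end Alg


section Comb

lemma des_eq {n : ℕ} (π : Equiv.Perm (Fin (n+1))) :
    des π = ∑ i : Fin n, if π i.succ < π i.castSucc then 1 else 0 := by
  unfold des descents
  rw [card_filter, Fin.sum_univ_castSucc]
  simp [Fin.succ]

lemma P_eq {n : ℕ} (π : Equiv.Perm (Fin (n+1))) :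
    P2d31 π = ∑ j : Fin n, ∑ i : Fin n, 
      if i < j ∧ π j.succ < π i.castSucc ∧ π i.castSucc < π j.castSucc then 1 else 0 := by
  unfold P2d31
  rw [card_filter, ← univ_product_univ, sum_product_right, Fin.sum_univ_castSucc]
  have h : ∀ i : Fin (n+1), ¬ (Fin.last n < i) := fun i => not_lt.2 (Fin.le_last i)
  simp only [Fin.val_last, lt_irrefl, IsEmpty.exists_iff, and_false, if_false, sum_const_zero,
    add_zero]
  apply sum_congr rfl; intro j _
  rw [Fin.sum_univ_castSucc, if_neg (fun h' => h _ h'.1), add_zero]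
  apply sum_congr rfl; intro i _
  simp [Fin.succ]

/-- append a last letter `a` to `σ` -/
def app {n : ℕ} (x : Fin (n+2) × Equiv.Perm (Fin (n+1))) : Equiv.Perm (Fin (n+2)) :=
  (finSuccEquiv' (Fin.last (n+1))).trans
    ((Equiv.optionCongr x.2).trans (finSuccEquiv' x.1).symm)

lemma app_last {n : ℕ} (x : Fin (n+2) × Equiv.Perm (Fin (n+1))) :
    app x (Fin.last (n+1)) = x.1 := by
  simp [app]

lemma app_cast {n : ℕ} (x : Fin (n+2) × Equiv.Perm (Fin (n+1))) (i : Fin (n+1)) :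
    app x i.castSucc = x.1.succAbove (x.2 i) := by
  have : finSuccEquiv' (Fin.last (n+1)) i.castSucc = some i := by
    rw [← Fin.succAbove_last]; simp
  simp [app, this]

lemma app_bij (n : ℕ) : Function.Bijective (app (n := n)) := by
  rw [Fintype.bijective_iff_injective_and_card]
  constructor
  · rintro ⟨a, σ⟩ ⟨b, τ⟩ h
    have h1 : a = b := by
      have := congrArg (fun f => f (Fin.last (n+1))) h
      simpa [app_last] using this
    subst h1
    congr 1
    ext i
    have := congrArg (fun f => f i.castSucc) h
    simp only [app_cast] at this
    rw [Fin.succAbove_right_injective this]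
  · simp [Fintype.card_perm, Nat.factorial_succ]

lemma des_app {n : ℕ} (a : Fin (n+2)) (σ : Equiv.Perm (Fin (n+1))) :
    des (app (a, σ)) = des σ + if a.val ≤ (σ (Fin.last n)).val then 1 else 0 := by
  rw [des_eq, des_eq, Fin.sum_univ_castSucc]
  congr 1
  · apply sum_congr rfl; intro i _
    rw [Fin.succ_castSucc, app_cast, app_cast]
    simp [Fin.succAbove_lt_succAbove_iff]
  · rw [Fin.succ_last, app_last, app_cast]
    simp only [Fin.lt_succAbove_iff_le_castSucc, Fin.le_def, Fin.val_castSucc]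

lemma P_app {n : ℕ} (a : Fin (n+2)) (σ : Equiv.Perm (Fin (n+1))) :
    P2d31 (app (a, σ)) = P2d31 σ + ((σ (Fin.last n)).val - a.val) := by
  rw [P_eq, P_eq, Fin.sum_univ_castSucc]
  congr 1
  · apply sum_congr rfl; intro j _
    rw [Fin.sum_univ_castSucc]
    have h : ¬ (Fin.last n < j.castSucc) := not_lt.2 (Fin.le_last _)
    simp only [h, false_and, if_false, add_zero]
    apply sum_congr rfl; intro i _
    simp only [Fin.succ_castSucc, app_cast, Fin.succAbove_lt_succAbove_iff, Fin.castSucc_lt_castSucc_iff]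
  · have : ∀ i : Fin (n+1), (i < Fin.last n ∧ app (a, σ) (Fin.last n).succ < app (a, σ) i.castSucc ∧
       app (a, σ) i.castSucc < app (a, σ) (Fin.last n).castSucc) ↔
       a.val ≤ (σ i).val ∧ (σ i).val < (σ (Fin.last n)).val := by
      intro i
      rw [Fin.succ_last, app_last, app_cast, app_cast]
      simp only [Fin.lt_succAbove_iff_le_castSucc, Fin.succAbove_lt_succAbove_iff, Fin.le_def, Fin.val_castSucc]
      constructor
      · rintro ⟨_, h1, h2⟩; exact ⟨h1, h2⟩
      · rintro ⟨h1, h2⟩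
        refine ⟨?_, h1, h2⟩
        rw [Fin.lt_last_iff_ne_last]
        rintro rfl
        exact lt_irrefl _ h2
    simp only [this]
    rw [Equiv.sum_comp σ (fun v : Fin (n+1) => if a.val ≤ v.val ∧ v.val < (σ (Fin.last n)).val then 1 else 0)]
    rw [Fin.sum_univ_eq_sum_range (fun v => if a.val ≤ v ∧ v < (σ (Fin.last n)).val then 1 else 0),
      ← card_filter, ← Nat.card_Ico]
    congr 1
    ext v
    have := (σ (Fin.last n)).isLt
    simp; omega

variable {S : Type*} [CommRing S]

lemma GG_perm (q y : S) (n : ℕ) (a : Fin (n+1)) :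
    ∑ σ : Equiv.Perm (Fin (n+1)), (if σ (Fin.last n) = a then q ^ P2d31 σ * y ^ des σ else 0)
      = GG q y a (n - a) := by
  induction n with
  | zero =>
    have e : ∀ σ : Equiv.Perm (Fin (0+1)), σ (Fin.last 0) = a := fun σ =>
      (Fin.subsingleton_one : Subsingleton (Fin 1)).elim _ _
    have ha : a.val = 0 := by omega
    simp only [e, if_true, ha]
    simp [P_eq, des_eq, GG, opX, opB_vac, vac]
  | succ n ih =>
    rw [GG_rec q y n a (n+1-a) (by omega),
      ← Function.Bijective.sum_comp (app_bij n), Fintype.sum_prod_type]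
    simp only [app_last]
    rw [Finset.sum_comm]
    simp only [sum_ite_eq', mem_univ, if_true, des_app, P_app]
    rw [← Fin.sum_univ_eq_sum_range
      (fun l => (if l < a.val then 1 else y * q ^ (l - a.val)) * GG q y l (n - l))]
    simp only [← ih]
    simp only [mul_sum]
    rw [Finset.sum_comm]
    apply sum_congr rfl; intro σ _
    simp only [mul_ite, mul_zero, sum_ite_eq, mem_univ, if_true]
    by_cases h : (σ (Fin.last n)).val < a.val
    · rw [if_neg (by omega), if_pos h, Nat.sub_eq_zero_of_le (by omega)]
      simp
    · rw [if_pos (by omega), if_neg h, pow_add, pow_add]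
      ring

lemma total_perm (q y : S) (n : ℕ) :
    ∑ σ : Equiv.Perm (Fin n), q ^ P2d31 σ * y ^ des σ = rr q y n 0 := by
  cases n with
  | zero => simp [P2d31, des, descents, rr, uvec, vac]
  | succ n =>
    rw [← GG_total, ← Fin.sum_univ_eq_sum_range (fun l => GG q y l (n - l))]
    simp only [← GG_perm]
    rw [Finset.sum_comm]
    simp

end Comb

section Final
open Polynomial

lemma coeff_lin_pow (c : ℝ) (n i : ℕ) :
    ((1 - X * C c : ℝ[X]) ^ n).coeff i = (-c) ^ i * (n.choose i : ℝ) := by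
  have : (1 - X * C c : ℝ[X]) ^ n = ((1 + X) ^ n : ℝ[X]).comp (C (-c) * X) := by
    simp; ring
  rw [this, comp_C_mul_X_coeff, coeff_one_add_X_pow]; ring

lemma br_C (q : ℝ) (j : ℕ) : br (C q) j = C (br q j) := by
  simp [br]

lemma term_coeff (q : ℝ) (hq : 0 < q) (n j i : ℕ) :
    (lam (C q) (C q⁻¹) X j ^ n * mu (C q) (C q⁻¹) X j : ℝ[X]).coeff (j + i) * q ^ ((j+i)^2) =
      (-1) ^ i * br q j ^ n * q ^ ((j+i) * i) *
        ((n.choose i : ℝ) * q ^ j + if i = 0 then 0 else (n.choose (i-1) : ℝ)) := by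
  have hq0 : q ≠ 0 := hq.ne'
  have e : (lam (C q) (C q⁻¹) X j ^ n * mu (C q) (C q⁻¹) X j : ℝ[X]) =
      (C (br q j ^ n * (q ^ j * q⁻¹ ^ (j*j))) * (1 - X * C (q⁻¹ ^ j)) ^ n -
        X * (C (br q j ^ n * (q ^ (j+1) * q⁻¹ ^ ((j+1)*(j+1)))) * (1 - X * C (q⁻¹ ^ j)) ^ n))
        * X ^ j := by
    unfold lam mu aa
    rw [br_C]
    simp only [map_mul, map_pow, mul_pow]
    ring
  rw [e, add_comm j i, coeff_mul_X_pow, coeff_sub]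
  cases i with
  | zero =>
    rw [coeff_X_mul_zero, coeff_C_mul, coeff_lin_pow]
    simp
    field_simp
    ring
  | succ i =>
    simp only [coeff_C_mul, coeff_lin_pow, coeff_X_mul, Nat.add_sub_cancel, Nat.succ_ne_zero, if_false]
    have h1 : q ^ ((i+1+j)^2) = q ^ ((i+1+j)*(i+1)) * (q ^ (j*j) * (q ^ j) ^ (i+1)) := by
      rw [← pow_mul, ← pow_add, ← pow_add]; congr 1; ring
    have h2 : q⁻¹ ^ (j*j) * q ^ (j*j) = 1 := pq_pow (inv_mul_cancel₀ hq0) _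
    have h3 : q⁻¹ ^ j * q ^ j = 1 := pq_pow (inv_mul_cancel₀ hq0) _
    have h4 : (q⁻¹ ^ j) ^ i * (q ^ j) ^ i = 1 := pq_pow h3 _
    have h5 : q ^ (j+1) * q⁻¹ ^ ((j+1)*(j+1)) = q⁻¹ ^ (j*j) * q⁻¹ ^ j := by
      have : q⁻¹ ^ ((j+1)*(j+1)) = q⁻¹ ^ (j*j) * q⁻¹ ^ j * q⁻¹ ^ (j+1) := by
        rw [← pow_add, ← pow_add]; congr 1; ring
      rw [this]
      have h6 : q⁻¹ ^ (j+1) * q ^ (j+1) = 1 := pq_pow (inv_mul_cancel₀ hq0) _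
      linear_combination q⁻¹ ^ (j*j) * q⁻¹ ^ j * h6
    rw [h5, h1]
    simp only [neg_pow (q⁻¹ ^ j), pow_succ _ i]
    generalize q⁻¹ ^ (j*j) = a at *
    generalize q ^ (j*j) = b at *
    generalize (q⁻¹ ^ j) ^ i = c at *
    generalize (q ^ j) ^ i = d at *
    generalize q⁻¹ ^ j = f at *
    generalize q ^ j = g at *
    have hA : a * f * c * (b * d * g) = 1 := by
      linear_combination f * g * c * d * h2 + f * g * h4 + h3
    linear_combination (-(-1) ^ i * br q j ^ n * q ^ ((i+1+j)*(i+1)) *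
      (g * (n.choose (i+1) : ℝ) + (n.choose i : ℝ))) * hA

lemma real_identity (q : ℝ) (hq : 0 < q) (n k : ℕ) (hk : 1 ≤ k) :
    (∑ σ : Equiv.Perm (Fin n), if des σ = k - 1 then q ^ P2d31 σ else 0) * q ^ (k^2) =
    ∑ i ∈ range k, (-1) ^ i * br q (k-i) ^ n * q ^ (k * i) *
        ((n.choose i : ℝ) * q ^ (k-i) + if i = 0 then 0 else (n.choose (i-1) : ℝ)) := by
  have hp : (C q⁻¹ : ℝ[X]) * C q = 1 := by
    rw [← C_mul, inv_mul_cancel₀ hq.ne', C_1]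
  have h := ss_main (C q) (C q⁻¹) (X : ℝ[X]) hp k n 0
  have h1 := X_pow_dvd_iff.1 h k (Nat.lt_succ_self k)
  rw [coeff_sub, sub_eq_zero, ← total_perm] at h1
  obtain ⟨k', rfl⟩ : ∃ k', k = k' + 1 := ⟨k - 1, by omega⟩
  rw [coeff_X_mul, finsetSum_coeff] at h1
  have e1 : ∀ σ : Equiv.Perm (Fin n), (C q ^ P2d31 σ * X ^ des σ : ℝ[X]).coeff k' =
      if des σ = k' then q ^ P2d31 σ else 0 := by
    intro σ
    rw [← C_pow, coeff_C_mul, coeff_X_pow]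
    simp [eq_comm]
  simp only [e1] at h1
  rw [Nat.add_sub_cancel, h1, ss, finsetSum_coeff, sum_mul]
  conv_lhs => rw [← sum_range_reflect]
  apply sum_congr rfl; intro i hi
  have hi := mem_range.1 hi
  have t := term_coeff q hq n (k' + 1 - i) i
  have e2 : k' + 1 - 1 - i + 1 = k' + 1 - i := by omega
  have e3 : k' + 1 - i + i = k' + 1 := by omega
  rw [e3] at t
  rw [e2, ← t]
  simp [Phi, PB, PY]

lemma poly_identity (n k : ℕ) (hk : 1 ≤ k) :
    (∑ σ : Equiv.Perm (Fin n), if des σ = k - 1 then (X : ℤ[X]) ^ P2d31 σ else 0) * X ^ (k^2) =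
    ∑ i ∈ Finset.range k,
        (-1 : Polynomial ℤ) ^ i * (∑ t ∈ Finset.range (k - i), Polynomial.X ^ t) ^ n *
          Polynomial.X ^ (k * i) *
          ((n.choose i : Polynomial ℤ) * Polynomial.X ^ (k - i) +
            Polynomial.C (if i = 0 then 0 else (n.choose (i - 1) : ℤ))) := by
  apply Polynomial.map_injective (Int.castRingHom ℝ) Int.cast_injective
  apply Polynomial.eq_of_infinite_eval_eq
  apply (Set.Ioi_infinite (0:ℝ)).mono
  intro q hq
  have h := real_identity q hq n k hk
  simp only [Set.mem_ofPred_eq, Polynomial.eval_map, Polynomial.eval₂_mul, Polynomial.eval₂_finsetSum,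
    Polynomial.eval₂_pow, Polynomial.eval₂_X, Polynomial.eval₂_add, Polynomial.eval₂_C,
    Polynomial.eval₂_neg, Polynomial.eval₂_one, Polynomial.eval₂_natCast, apply_ite (Polynomial.eval₂ (Int.castRingHom ℝ) q), Polynomial.eval₂_zero]
  simp only [br] at h
  rw [h]
  apply sum_congr rfl; intro i _
  congr 2
  split_ifs <;> simp

end Final

theorem count_des_2d31_eq_coeff (n k m : ℕ) (hk : 1 ≤ k) :
    ((Finset.univ.filter
        (fun π : Equiv.Perm (Fin n) => des π = k - 1 ∧ P2d31 π = m)).card : ℤ) =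
    (∑ i ∈ Finset.range k,
        (-1 : Polynomial ℤ) ^ i * (∑ t ∈ Finset.range (k - i), Polynomial.X ^ t) ^ n *
          Polynomial.X ^ (k * i) *
          ((n.choose i : Polynomial ℤ) * Polynomial.X ^ (k - i) +
            Polynomial.C (if i = 0 then 0 else (n.choose (i - 1) : ℤ)))).coeff
      (m + k ^ 2) := by
  rw [← poly_identity n k hk, Polynomial.coeff_mul_X_pow, Polynomial.finsetSum_coeff, card_filter]
  push_cast
  apply sum_congr rfl; intro σ _
  by_cases h : des σ = k - 1
  · simp [h, Polynomial.coeff_X_pow, eq_comm]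
  · simp [h]
end

section
/- The polynomial F_λ(p,q) counting valid 0/1-fillings of the Young diagram of λ = (λ_1,...,λ_k) (with λ_k ≥ 1) by number of 0's (exponent of p) and number of 1's (exponent of q) satisfies the recurrence F_λ(p,q) = p^{k-1} q · F_{(λ_1-1,...,λ_k-1)}(p,q) + q · F_{(λ_1,...,λ_{k-1},λ_k-1)}(p,q) + p^{λ_k} · F_{(λ_1,...,λ_{k-1})}(p,q), where terms whose shape has a zero part or fails to be a partition are interpreted appropriately. -/
open Finset


/-- Validity of a set `S` of cells containing a `1`, inside the diagram `D`. -/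
def CellValid (D S : Finset (ℕ × ℕ)) : Prop :=
  (∀ i j, (i, j) ∈ D → ∃ i', (i', j) ∈ S) ∧
  (∀ i j, (i, j) ∈ D → (i, j) ∉ S → ∀ i' j', i' < i → (i', j) ∈ S → j' < j → (i, j') ∉ S)

open Classical in
noncomputable def cellSum (D : Finset (ℕ × ℕ)) (p q : ℤ) : ℤ :=
  ∑ S ∈ D.powerset.filter (fun S => CellValid D S), p ^ (D.card - S.card) * q ^ S.card

def cellEmb {k : ℕ} (lam : Fin k → ℕ) : (Σ i : Fin k, Fin (lam i)) ↪ ℕ × ℕ where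
  toFun x := (x.1.val, x.2.val)
  inj' := by
    rintro ⟨⟨i, hi⟩, ⟨j, hj⟩⟩ ⟨⟨i', hi'⟩, ⟨j', hj'⟩⟩ h
    simp only [Prod.mk.injEq] at h
    obtain ⟨rfl, rfl⟩ := h
    rfl

def cells {k : ℕ} (lam : Fin k → ℕ) : Finset (ℕ × ℕ) := Finset.univ.map (cellEmb lam)

def onesCells {k : ℕ} {lam : Fin k → ℕ} (F : ∀ i : Fin k, Fin (lam i) → Bool) :
    Finset (ℕ × ℕ) :=
  (Finset.univ.filter (fun x : Σ i : Fin k, Fin (lam i) => F x.1 x.2 = true)).map (cellEmb lam)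

lemma mem_cells {k : ℕ} (lam : Fin k → ℕ) (i j : ℕ) :
    (i, j) ∈ cells lam ↔ ∃ h : i < k, j < lam ⟨i, h⟩ := by
  simp only [cells, Finset.mem_map, Finset.mem_univ, true_and, cellEmb]
  constructor
  · rintro ⟨⟨i, j⟩, h⟩
    obtain ⟨rfl, rfl⟩ := Prod.mk.inj h
    exact ⟨i.2, j.2⟩
  · rintro ⟨h, h'⟩
    exact ⟨⟨⟨i, h⟩, ⟨j, h'⟩⟩, rfl⟩

lemma mem_onesCells {k : ℕ} {lam : Fin k → ℕ} (F : ∀ i : Fin k, Fin (lam i) → Bool) (i j : ℕ) :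
    (i, j) ∈ onesCells F ↔ ∃ (h : i < k) (h' : j < lam ⟨i, h⟩), F ⟨i, h⟩ ⟨j, h'⟩ = true := by
  simp only [onesCells, Finset.mem_map, Finset.mem_filter, Finset.mem_univ, true_and, cellEmb]
  constructor
  · rintro ⟨⟨i, j⟩, hF, h⟩
    obtain ⟨rfl, rfl⟩ := Prod.mk.inj h
    exact ⟨i.2, j.2, hF⟩
  · rintro ⟨h, h', hF⟩
    exact ⟨⟨⟨i, h⟩, ⟨j, h'⟩⟩, hF, rfl⟩

lemma onesCells_subset {k : ℕ} {lam : Fin k → ℕ} (F : ∀ i : Fin k, Fin (lam i) → Bool) :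
    onesCells F ⊆ cells lam := Finset.map_subset_map.2 (Finset.subset_univ _)

lemma card_onesCells {k : ℕ} {lam : Fin k → ℕ} (F : ∀ i : Fin k, Fin (lam i) → Bool) :
    (onesCells F).card = fillOnes F := by
  simp only [onesCells, fillOnes, Finset.card_map, Finset.card_filter, Fintype.sum_sigma]

lemma card_cells_eq {k : ℕ} {lam : Fin k → ℕ} (F : ∀ i : Fin k, Fin (lam i) → Bool) :
    (cells lam).card = fillOnes F + fillZeros F := by
  rw [cells, Finset.card_map, fillOnes, fillZeros, ← Finset.sum_add_distrib]
  simp only [Finset.card_univ, Fintype.card_sigma, Fintype.card_fin]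
  refine Finset.sum_congr rfl fun i _ => ?_
  have := Finset.card_filter_add_card_filter_not (s := (Finset.univ : Finset (Fin (lam i))))
    (fun j => F i j = true)
  simpa using this.symm

lemma cellValid_iff {k : ℕ} {lam : Fin k → ℕ} (F : ∀ i : Fin k, Fin (lam i) → Bool) :
    CellValid (cells lam) (onesCells F) ↔ ValidFilling lam F := by
  simp only [CellValid, ValidFilling, mem_cells, mem_onesCells]
  refine and_congr ?_ ?_
  · constructor
    · intro h i j
      obtain ⟨i', h1, h2, h3⟩ := h i j ⟨i.2, j.2⟩
      exact ⟨⟨i', h1⟩, h2, h3⟩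
    · rintro h i j ⟨h1, h2⟩
      obtain ⟨i', h3, h4⟩ := h ⟨i, h1⟩ ⟨j, h2⟩
      exact ⟨i', i'.2, h3, h4⟩
  · constructor
    · rintro h i j hF ⟨⟨i', h1, h2, h3⟩, j', h4, h5⟩
      refine h i j ⟨i.2, j.2⟩ ?_ i' j' h2 ⟨i'.2, h1, h3⟩ h4 ⟨i.2, j'.2, h5⟩
      rintro ⟨_, _, h6⟩
      simp [hF] at h6
    · rintro h i j ⟨h1, h2⟩ hF i' j' hi ⟨h3, h4, h5⟩ hj ⟨h6, h7, h8⟩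
      refine h ⟨i, h1⟩ ⟨j, h2⟩ ?_ ⟨⟨⟨i', h3⟩, h4, hi, h5⟩, ⟨j', h7⟩, hj, h8⟩
      by_contra hc
      exact hF ⟨h1, h2, by simpa using hc⟩

lemma Fval_eq_cellSum {k : ℕ} (lam : Fin k → ℕ) (p q : ℤ) :
    Fval lam p q = cellSum (cells lam) p q := by
  classical
  unfold Fval cellSum
  refine Finset.sum_bij' (fun F _ => onesCells F) (fun S _ => fun i j => decide ((i.val, j.val) ∈ S))
    ?_ ?_ ?_ ?_ ?_
  · intro F hF
    simp only [Finset.mem_filter, Finset.mem_powerset, Finset.mem_univ, true_and] at hF ⊢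
    exact ⟨onesCells_subset F, (cellValid_iff F).2 hF⟩
  · intro S hS
    simp only [Finset.mem_filter, Finset.mem_powerset, Finset.mem_univ, true_and] at hS ⊢
    rw [← cellValid_iff]
    convert hS.2
    ext ⟨i, j⟩
    rw [mem_onesCells]
    constructor
    · rintro ⟨_, _, h⟩
      simpa using h
    · intro h
      obtain ⟨h1, h2⟩ := (mem_cells lam i j).1 (hS.1 h)
      exact ⟨h1, h2, by simpa using h⟩
  · intro F hF
    funext i j
    rw [Bool.eq_iff_iff, decide_eq_true_iff, mem_onesCells]
    exact ⟨fun ⟨_, _, h⟩ => h, fun h => ⟨i.2, j.2, h⟩⟩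
  · intro S hS
    simp only [Finset.mem_filter, Finset.mem_powerset] at hS
    ext ⟨i, j⟩
    rw [mem_onesCells]
    constructor
    · rintro ⟨_, _, h⟩
      simpa using h
    · intro h
      obtain ⟨h1, h2⟩ := (mem_cells lam i j).1 (hS.1 h)
      exact ⟨h1, h2, by simpa using h⟩
  · intro F hF
    rw [card_onesCells, card_cells_eq F, Nat.add_sub_cancel_left]

/-- Insert an empty column at position `m`. -/
def colShift (m : ℕ) (c : ℕ × ℕ) : ℕ × ℕ := (c.1, if c.2 < m then c.2 else c.2 + 1)

lemma colShift_inj (m : ℕ) : Function.Injective (colShift m) := by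
  rintro ⟨i, j⟩ ⟨i', j'⟩ h
  simp only [colShift, Prod.mk.injEq] at h ⊢
  refine ⟨h.1, ?_⟩
  have := h.2
  split_ifs at this <;> omega

section core

variable {K m : ℕ} {l : ℕ → ℕ} {D D1 D2 D3 : Finset (ℕ × ℕ)}

lemma core_three (hm : l K = m + 1)
    (hD : ∀ i j, (i, j) ∈ D ↔ i ≤ K ∧ j < l i)
    (hD3 : ∀ i j, (i, j) ∈ D3 ↔ i < K ∧ j < l i)
    (hl : ∀ i ≤ K, m + 1 ≤ l i) (hK : 1 ≤ K) (S : Finset (ℕ × ℕ)) :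
    ((S ⊆ D ∧ CellValid D S) ∧ (K, m) ∉ S) ↔ (S ⊆ D3 ∧ CellValid D3 S) := by
  constructor
  · rintro ⟨⟨hS, h1, h2⟩, h3⟩
    have hKm : (K, m) ∈ D := (hD _ _).2 ⟨le_rfl, by omega⟩
    have hrow : ∀ j, (K, j) ∉ S := by
      intro j hj
      have hjD := (hD _ _).1 (hS hj)
      have hjm : j ≠ m := by rintro rfl; exact h3 hj
      obtain ⟨i, hi⟩ := h1 K m hKm
      have hiD := (hD _ _).1 (hS hi)
      have hiK : i ≠ K := by rintro rfl; exact h3 hi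
      exact h2 K m hKm h3 i j (by omega) hi (by omega) hj
    refine ⟨?_, ?_, ?_⟩
    · rintro ⟨i, j⟩ h
      have := (hD _ _).1 (hS h)
      have hiK : i ≠ K := by rintro rfl; exact hrow j h
      exact (hD3 _ _).2 ⟨by omega, this.2⟩
    · intro i j h
      have := (hD3 _ _).1 h
      exact h1 i j ((hD _ _).2 ⟨by omega, this.2⟩)
    · intro i j h
      have := (hD3 _ _).1 h
      exact h2 i j ((hD _ _).2 ⟨by omega, this.2⟩)
  · rintro ⟨hS, h1, h2⟩
    have hrow : ∀ j, (K, j) ∉ S := by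
      intro j hj
      have := (hD3 _ _).1 (hS hj)
      omega
    refine ⟨⟨?_, ?_, ?_⟩, hrow m⟩
    · rintro ⟨i, j⟩ h
      have := (hD3 _ _).1 (hS h)
      exact (hD _ _).2 ⟨by omega, this.2⟩
    · intro i j h
      have := (hD _ _).1 h
      by_cases hi : i = K
      · subst hi
        exact h1 0 j ((hD3 _ _).2 ⟨by omega, by have := hl 0 (by omega); omega⟩)
      · exact h1 i j ((hD3 _ _).2 ⟨by omega, this.2⟩)
    · intro i j h hn i' j' hi' hS' hj' hS''
      have := (hD _ _).1 h
      by_cases hi : i = K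
      · subst hi
        exact hrow _ hS''
      · exact h2 i j ((hD3 _ _).2 ⟨by omega, this.2⟩) hn i' j' hi' hS' hj' hS''

lemma core_two_a (hm : l K = m + 1)
    (hD : ∀ i j, (i, j) ∈ D ↔ i ≤ K ∧ j < l i) (S : Finset (ℕ × ℕ))
    (hS : S ⊆ D) (hV : CellValid D S) (i0 : ℕ) (h0 : i0 < K) (h0S : (i0, m) ∈ S) :
    CellValid (D.erase (K, m)) (S.erase (K, m)) := by
  obtain ⟨h1, h2⟩ := hV
  constructor
  · intro i j h
    have hj := Finset.mem_of_mem_erase h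
    by_cases hjm : j = m
    · subst hjm
      exact ⟨i0, Finset.mem_erase.2 ⟨by simp; omega, h0S⟩⟩
    · obtain ⟨i', hi'⟩ := h1 i j hj
      exact ⟨i', Finset.mem_erase.2 ⟨by simp; omega, hi'⟩⟩
  · intro i j h hn i' j' hi' hS' hj' hS''
    rw [Finset.mem_erase] at h hS' hS'' hn
    exact h2 i j h.2 (fun h' => hn ⟨h.1, h'⟩) i' j' hi' hS'.2 hj' hS''.2

lemma core_two_b (hm : l K = m + 1)
    (hD : ∀ i j, (i, j) ∈ D ↔ i ≤ K ∧ j < l i)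
    (hl : ∀ i ≤ K, m + 1 ≤ l i) (hK : 1 ≤ K) (S : Finset (ℕ × ℕ))
    (hS : S ⊆ D.erase (K, m)) (hV : CellValid (D.erase (K, m)) S) :
    CellValid D (insert (K, m) S) ∧ ∃ i < K, (i, m) ∈ S := by
  obtain ⟨h1, h2⟩ := hV
  have hex : ∃ i < K, (i, m) ∈ S := by
    obtain ⟨i, hi⟩ := h1 0 m (Finset.mem_erase.2
      ⟨by simp; omega, (hD _ _).2 ⟨by omega, by have := hl 0 (by omega); omega⟩⟩)
    have h3 := Finset.mem_erase.1 (hS hi)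
    have h4 := (hD _ _).1 h3.2
    have h5 : i ≠ K := by rintro rfl; exact h3.1 rfl
    exact ⟨i, by omega, hi⟩
  refine ⟨⟨?_, ?_⟩, hex⟩
  · intro i j h
    by_cases hc : (i, j) = (K, m)
    · exact ⟨i, by simp [hc]⟩
    · obtain ⟨i', hi'⟩ := h1 i j (Finset.mem_erase.2 ⟨hc, h⟩)
      exact ⟨i', Finset.mem_insert_of_mem hi'⟩
  · intro i j h hn i' j' hi' hS' hj' hS''
    have hiD := (hD _ _).1 h
    rw [Finset.mem_insert, not_or] at hn
    rw [Finset.mem_insert] at hS' hS''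
    rcases hS' with hS' | hS'
    · simp only [Prod.mk.injEq] at hS'
      omega
    rcases hS'' with hS'' | hS''
    · simp only [Prod.mk.injEq] at hS''
      obtain ⟨rfl, rfl⟩ := hS''
      omega
    exact h2 i j (Finset.mem_erase.2 ⟨hn.1, h⟩) hn.2 i' j' hi' hS' hj' hS''

lemma colShift_mem (hm : l K = m + 1)
    (hD : ∀ i j, (i, j) ∈ D ↔ i ≤ K ∧ j < l i)
    (hD1 : ∀ i j, (i, j) ∈ D1 ↔ i ≤ K ∧ j < l i - 1)
    (hl : ∀ i ≤ K, m + 1 ≤ l i) (c : ℕ × ℕ) : colShift m c ∈ D ↔ c ∈ D1 := by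
  obtain ⟨i, j⟩ := c
  simp only [colShift]
  rw [hD, hD1]
  refine and_congr_right fun h => ?_
  have := hl i h
  split_ifs <;> omega

lemma exists_colShift (i j : ℕ) (h : j ≠ m) : ∃ j', colShift m (i, j') = (i, j) := by
  by_cases hj : j < m
  · exact ⟨j, by simp [colShift, hj]⟩
  · refine ⟨j - 1, ?_⟩
    have : ¬ (j - 1 < m) := by omega
    simp only [colShift, if_neg this, Prod.mk.injEq, true_and]
    omega

/-- The column of a shifted cell. -/
def colPos (m j : ℕ) : ℕ := if j < m then j else j + 1

lemma colShift_mk (i j : ℕ) : colShift m (i, j) = (i, colPos m j) := rfl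

lemma colPos_ne (j : ℕ) : colPos m j ≠ m := by
  unfold colPos; split_ifs <;> omega

lemma colPos_lt {j j' : ℕ} : colPos m j < colPos m j' ↔ j < j' := by
  unfold colPos; split_ifs <;> omega

lemma exists_colPos (j : ℕ) (h : j ≠ m) : ∃ j', colPos m j' = j := by
  obtain ⟨j', hj'⟩ := exists_colShift (m := m) 0 j h
  exact ⟨j', (Prod.mk.inj hj').2⟩

lemma core_one_a (hm : l K = m + 1)
    (hD : ∀ i j, (i, j) ∈ D ↔ i ≤ K ∧ j < l i)
    (hD1 : ∀ i j, (i, j) ∈ D1 ↔ i ≤ K ∧ j < l i - 1)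
    (hl : ∀ i ≤ K, m + 1 ≤ l i) (S T : Finset (ℕ × ℕ))
    (hT : ∀ c, c ∈ T ↔ colShift m c ∈ S)
    (hV : CellValid D S) :
    CellValid D1 T := by
  obtain ⟨h1, h2⟩ := hV
  have hsh := colShift_mem hm hD hD1 hl
  constructor
  · intro i j h
    obtain ⟨i', hi'⟩ := h1 i (colPos m j) ((hsh (i, j)).2 h)
    exact ⟨i', (hT _).2 hi'⟩
  · intro i j h hn i' j' hi' hS' hj' hS''
    rw [hT] at hn hS' hS''
    exact h2 i (colPos m j) ((hsh (i, j)).2 h) hn i' (colPos m j') hi' hS' (colPos_lt.2 hj') hS''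

lemma core_one_b (hm : l K = m + 1)
    (hD : ∀ i j, (i, j) ∈ D ↔ i ≤ K ∧ j < l i)
    (hD1 : ∀ i j, (i, j) ∈ D1 ↔ i ≤ K ∧ j < l i - 1)
    (hl : ∀ i ≤ K, m + 1 ≤ l i) (S T : Finset (ℕ × ℕ))
    (hT : ∀ c, c ∈ T ↔ colShift m c ∈ S) (hKm : (K, m) ∈ S) (hcol : ∀ i, (i, m) ∈ S → i = K)
    (hV : CellValid D1 T) :
    CellValid D S := by
  obtain ⟨h1, h2⟩ := hV
  have hsh := colShift_mem hm hD hD1 hl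
  constructor
  · intro i j h
    by_cases hj : j = m
    · exact ⟨K, hj ▸ hKm⟩
    · obtain ⟨j, rfl⟩ := exists_colPos j hj
      obtain ⟨i', hi'⟩ := h1 i j ((hsh (i, j)).1 h)
      exact ⟨i', (hT _).1 hi'⟩
  · intro i j h hn i' j' hi' hS' hj' hS''
    have hiD := (hD _ _).1 h
    by_cases hj : j = m
    · subst hj
      have := hcol _ hS'
      omega
    obtain ⟨j, rfl⟩ := exists_colPos j hj
    by_cases hj0 : j' = m
    · subst hj0
      have := hcol _ hS''
      subst this
      omega
    obtain ⟨j', rfl⟩ := exists_colPos j' hj0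
    exact h2 i j ((hsh (i, j)).1 h) (fun h' => hn ((hT _).1 h')) i' j' hi' ((hT _).2 hS')
      (colPos_lt.1 hj') ((hT _).2 hS'')

lemma card_D_three (hm : l K = m + 1)
    (hD : ∀ i j, (i, j) ∈ D ↔ i ≤ K ∧ j < l i)
    (hD3 : ∀ i j, (i, j) ∈ D3 ↔ i < K ∧ j < l i) : D.card = D3.card + (m + 1) := by
  have : D = D3 ∪ ({K} : Finset ℕ) ×ˢ Finset.range (m + 1) := by
    ext ⟨i, j⟩
    simp only [Finset.mem_union, Finset.mem_product, Finset.mem_singleton, Finset.mem_range, hD, hD3]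
    constructor
    · rintro ⟨h1, h2⟩
      by_cases h : i = K
      · subst h; right; omega
      · left; omega
    · rintro (h | ⟨rfl, h⟩) <;> omega
  rw [this, Finset.card_union_of_disjoint]
  · simp
  · rw [Finset.disjoint_left]
    rintro ⟨i, j⟩ h h'
    rw [hD3] at h
    simp only [Finset.mem_product, Finset.mem_singleton] at h'
    omega

lemma card_D_one (hm : l K = m + 1)
    (hD : ∀ i j, (i, j) ∈ D ↔ i ≤ K ∧ j < l i)
    (hD1 : ∀ i j, (i, j) ∈ D1 ↔ i ≤ K ∧ j < l i - 1)
    (hl : ∀ i ≤ K, m + 1 ≤ l i) : D.card = D1.card + (K + 1) := by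
  have hsh := colShift_mem hm hD hD1 hl
  have : D = D1.image (colShift m) ∪ Finset.range (K + 1) ×ˢ ({m} : Finset ℕ) := by
    ext ⟨i, j⟩
    simp only [Finset.mem_union, Finset.mem_product, Finset.mem_singleton, Finset.mem_range,
      Finset.mem_image]
    constructor
    · intro h
      by_cases hj : j = m
      · right
        have := (hD _ _).1 h
        omega
      · left
        obtain ⟨j', hj'⟩ := exists_colShift i j hj
        exact ⟨(i, j'), (hsh _).1 (hj' ▸ h), hj'⟩
    · rintro (⟨c, hc, hc'⟩ | ⟨h, rfl⟩)
      · rw [← hc']; exact (hsh c).2 hc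
      · rw [hD]; have := hl i (by omega); omega
  rw [this, Finset.card_union_of_disjoint, Finset.card_image_of_injective _ (colShift_inj m)]
  · simp
  · rw [Finset.disjoint_left]
    rintro ⟨i, j⟩ h h'
    simp only [Finset.mem_product, Finset.mem_singleton] at h'
    obtain ⟨⟨a, b⟩, -, hc⟩ := Finset.mem_image.1 h
    exact colPos_ne (m := m) b ((Prod.mk.inj hc).2.trans h'.2)

lemma core_sum (hm : l K = m + 1)
    (hD : ∀ i j, (i, j) ∈ D ↔ i ≤ K ∧ j < l i)
    (hD1 : ∀ i j, (i, j) ∈ D1 ↔ i ≤ K ∧ j < l i - 1)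
    (hD2 : D2 = D.erase (K, m))
    (hD3 : ∀ i j, (i, j) ∈ D3 ↔ i < K ∧ j < l i)
    (hl : ∀ i ≤ K, m + 1 ≤ l i) (hK : 1 ≤ K) (p q : ℤ) :
    cellSum D p q = p ^ K * q * cellSum D1 p q + q * cellSum D2 p q +
      p ^ (m + 1) * cellSum D3 p q := by
  classical
  have hKm : (K, m) ∈ D := (hD _ _).2 ⟨le_rfl, by omega⟩
  have hsh := colShift_mem hm hD hD1 hl
  unfold cellSum
  rw [← Finset.sum_filter_add_sum_filter_not (D.powerset.filter (fun S => CellValid D S))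
    (fun S => (K, m) ∈ S)]
  rw [← Finset.sum_filter_add_sum_filter_not ((D.powerset.filter (fun S => CellValid D S)).filter
    (fun S => (K, m) ∈ S)) (fun S => ∀ i, (i, m) ∈ S → i = K)]
  simp only [Finset.mul_sum]
  congr 1
  · congr 1
    · refine Finset.sum_bij' (fun S _ => D1.filter (fun c => colShift m c ∈ S))
        (fun T _ => insert (K, m) (T.image (colShift m))) ?_ ?_ ?_ ?_ ?_
      · intro S hS
        simp only [Finset.mem_filter, Finset.mem_powerset] at hS ⊢
        obtain ⟨⟨⟨hSD, hV⟩, h1⟩, h2⟩ := hS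
        refine ⟨Finset.filter_subset _ _, core_one_a hm hD hD1 hl S _ ?_ hV⟩
        intro c
        rw [Finset.mem_filter, and_iff_right_iff_imp]
        exact fun h => (hsh c).1 (hSD h)
      · intro T hT
        simp only [Finset.mem_filter, Finset.mem_powerset] at hT ⊢
        obtain ⟨hTD, hV⟩ := hT
        have hcol : ∀ i, (i, m) ∈ insert (K, m) (T.image (colShift m)) → i = K := by
          intro i hi
          rw [Finset.mem_insert, Finset.mem_image] at hi
          rcases hi with hi | ⟨⟨a, b⟩, -, hc⟩
          · exact (Prod.mk.inj hi).1
          · exact absurd (Prod.mk.inj hc).2 (colPos_ne b)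
        refine ⟨⟨⟨?_, ?_⟩, Finset.mem_insert_self _ _⟩, hcol⟩
        · intro c hc
          rw [Finset.mem_insert, Finset.mem_image] at hc
          rcases hc with rfl | ⟨c, hc, rfl⟩
          · exact hKm
          · exact (hsh c).2 (hTD hc)
        · refine core_one_b hm hD hD1 hl _ T ?_ (Finset.mem_insert_self _ _) hcol hV
          rintro ⟨i, j⟩
          rw [Finset.mem_insert, (colShift_inj m).mem_finset_image]
          constructor
          · exact Or.inr
          · rintro (h | h)
            · exact absurd (Prod.mk.inj h).2 (colPos_ne j)
            · exact h
      · intro S hS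
        simp only [Finset.mem_filter, Finset.mem_powerset] at hS
        obtain ⟨⟨⟨hSD, hV⟩, h1⟩, h2⟩ := hS
        ext ⟨i, j⟩
        rw [Finset.mem_insert, Finset.mem_image]
        constructor
        · rintro (h | ⟨c, hc, hc'⟩)
          · rw [h]; exact h1
          · rw [← hc']; exact (Finset.mem_filter.1 hc).2
        · intro h
          by_cases hj : j = m
          · subst hj
            left
            rw [h2 i h]
          · right
            obtain ⟨j', hj'⟩ := exists_colShift i j hj
            refine ⟨(i, j'), Finset.mem_filter.2 ⟨(hsh _).1 ?_, ?_⟩, hj'⟩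
            · rw [hj']; exact hSD h
            · rw [hj']; exact h
      · intro T hT
        simp only [Finset.mem_filter, Finset.mem_powerset] at hT
        ext ⟨i, j⟩
        rw [Finset.mem_filter, Finset.mem_insert, (colShift_inj m).mem_finset_image]
        constructor
        · rintro ⟨_, h | h⟩
          · exact absurd (Prod.mk.inj h).2 (colPos_ne j)
          · exact h
        · intro h
          exact ⟨hT.1 h, Or.inr h⟩
      · intro S hS
        simp only [Finset.mem_filter, Finset.mem_powerset] at hS
        obtain ⟨⟨⟨hSD, hV⟩, h1⟩, h2⟩ := hS
        have hcard : S.card = (D1.filter (fun c => colShift m c ∈ S)).card + 1 := by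
          rw [← Finset.card_erase_add_one h1,
            ← Finset.card_image_of_injective (D1.filter (fun c => colShift m c ∈ S))
              (colShift_inj m)]
          congr 2
          ext ⟨i, j⟩
          rw [Finset.mem_erase, Finset.mem_image]
          constructor
          · rintro ⟨hne, h⟩
            have hj : j ≠ m := by
              rintro rfl
              exact hne (by rw [h2 i h])
            obtain ⟨j', hj'⟩ := exists_colShift i j hj
            refine ⟨(i, j'), Finset.mem_filter.2 ⟨(hsh _).1 ?_, ?_⟩, hj'⟩
            · rw [hj']; exact hSD h
            · rw [hj']; exact h
          · rintro ⟨⟨a, b⟩, hc, hc'⟩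
            rw [← hc']
            refine ⟨fun h => colPos_ne b (Prod.mk.inj h).2, (Finset.mem_filter.1 hc).2⟩
        have hle := Finset.card_le_card (Finset.filter_subset (fun c => colShift m c ∈ S) D1)
        have hc1 := card_D_one hm hD hD1 hl
        generalize (D1.filter (fun c => colShift m c ∈ S)).card = t at *
        have : D.card - S.card = K + (D1.card - t) := by omega
        rw [this, hcard]
        ring
    · subst hD2
      refine Finset.sum_bij' (fun S _ => S.erase (K, m)) (fun T _ => insert (K, m) T) ?_ ?_ ?_ ?_ ?_
      · intro S hS
        simp only [Finset.mem_filter, Finset.mem_powerset] at hS ⊢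
        obtain ⟨⟨⟨hSD, hV⟩, h1⟩, h2⟩ := hS
        push Not at h2
        obtain ⟨i, hi, hiK⟩ := h2
        have := (hD _ _).1 (hSD hi)
        exact ⟨Finset.erase_subset_erase _ hSD, core_two_a hm hD S hSD hV i (by omega) hi⟩
      · intro T hT
        simp only [Finset.mem_filter, Finset.mem_powerset] at hT ⊢
        obtain ⟨hV, i, hi, hiT⟩ := core_two_b hm hD hl hK T hT.1 hT.2
        refine ⟨⟨⟨?_, hV⟩, Finset.mem_insert_self _ _⟩, ?_⟩
        · exact Finset.insert_subset hKm (hT.1.trans (Finset.erase_subset _ _))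
        · intro h
          have := h i (Finset.mem_insert_of_mem hiT)
          omega
      · intro S hS
        simp only [Finset.mem_filter] at hS
        exact Finset.insert_erase hS.1.2
      · intro T hT
        simp only [Finset.mem_filter, Finset.mem_powerset] at hT
        exact Finset.erase_insert fun h => (Finset.mem_erase.1 (hT.1 h)).1 rfl
      · intro S hS
        simp only [Finset.mem_filter] at hS
        have h1 := Finset.card_erase_add_one hS.1.2
        have h2 := Finset.card_erase_add_one hKm
        rw [← h1, ← h2, Nat.add_sub_add_right]
        ring
  · have hset : (D.powerset.filter (fun S => CellValid D S)).filter (fun S => (K, m) ∉ S) =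
        D3.powerset.filter (fun S => CellValid D3 S) := by
      ext S
      simp only [Finset.mem_filter, Finset.mem_powerset]
      exact core_three hm hD hD3 hl hK S
    rw [hset]
    refine Finset.sum_congr rfl fun S hS => ?_
    simp only [Finset.mem_filter, Finset.mem_powerset] at hS
    have hle := Finset.card_le_card hS.1
    have hc := card_D_three hm hD hD3
    have : D.card - S.card = (m + 1) + (D3.card - S.card) := by omega
    rw [this]
    ring

end core

theorem Fval_recurrence (k : ℕ) (hk : 2 ≤ k) (lam : Fin k → ℕ) (hanti : Antitone lam)
    (hpos : ∀ i, 1 ≤ lam i) (p q : ℤ) :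
    Fval lam p q =
      p ^ (k - 1) * q * Fval (fun i => lam i - 1) p q +
      q * Fval (Function.update lam ⟨k - 1, by omega⟩ (lam ⟨k - 1, by omega⟩ - 1)) p q +
      p ^ (lam ⟨k - 1, by omega⟩) *
        Fval (fun i : Fin (k - 1) => lam (Fin.castLE (Nat.sub_le k 1) i)) p q := by
  obtain ⟨K, rfl⟩ : ∃ K, k = K + 1 := ⟨k - 1, by omega⟩
  simp only [Fval_eq_cellSum, Nat.add_sub_cancel]
  have hKpos := hpos ⟨K, by omega⟩
  obtain ⟨m, hm⟩ : ∃ m, lam ⟨K, by omega⟩ = m + 1 := ⟨lam ⟨K, by omega⟩ - 1, by omega⟩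
  rw [hm]
  have hL : ∀ i (h : i < K + 1),
      (fun i => if h : i < K + 1 then lam ⟨i, h⟩ else 0) i = lam ⟨i, h⟩ := by
    intro i h
    simp [h]
  generalize (fun i => if h : i < K + 1 then lam ⟨i, h⟩ else 0) = l at hL
  refine core_sum (l := l) (K := K) (m := m) ?_ ?_ ?_ ?_ ?_ ?_ (by omega) p q
  · rw [hL K (by omega), hm]
  · intro i j
    rw [mem_cells]
    constructor
    · rintro ⟨h, h'⟩
      rw [hL i h]
      exact ⟨by omega, h'⟩
    · rintro ⟨h, h'⟩
      rw [hL i (by omega)] at h'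
      exact ⟨by omega, h'⟩
  · intro i j
    rw [mem_cells]
    constructor
    · rintro ⟨h, h'⟩
      rw [hL i h]
      exact ⟨by omega, h'⟩
    · rintro ⟨h, h'⟩
      rw [hL i (by omega)] at h'
      exact ⟨by omega, h'⟩
  · ext ⟨i, j⟩
    rw [Finset.mem_erase, mem_cells, mem_cells]
    by_cases hi : i = K
    · subst hi
      simp [hm]
      omega
    · simp [hi, Function.update_apply]
  · intro i j
    rw [mem_cells]
    constructor
    · rintro ⟨h, h'⟩
      rw [hL i (by omega)]
      exact ⟨h, h'⟩
    · rintro ⟨h, h'⟩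
      rw [hL i (by omega)] at h'
      exact ⟨h, h'⟩
  · intro i hi
    rw [hL i (by omega), ← hm]
    exact hanti (Fin.mk_le_mk.2 hi)
end

section
/- The number of permutation tableaux whose underlying partition is contained in a k×(n-k) rectangle and has exactly n-k columns equals the number of permutations of {1,...,n} with exactly k weak excedances. -/
open Finset


namespace PermTab

/-! ### The algebraic recurrence -/

/-- Weighted tableau numbers, defined by the tableau recurrence. -/
def a : ℕ → ℕ → ℤ → ℤ
  | 0, 0, _ => 1
  | 0, _ + 1, _ => 0
  | n + 1, 0, x => x * (a n 0 (x + 1) - a n 0 x)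
  | n + 1, k + 1, x => x * a n k x + x * (a n (k + 1) (x + 1) - a n (k + 1) x)

lemma a_succ_zero (n : ℕ) (x : ℤ) : a (n + 1) 0 x = 0 := by
  induction n generalizing x with
  | zero => simp [a]
  | succ n ih => rw [a, ih, ih]; ring

lemma a_gt (n k : ℕ) (h : n < k) (x : ℤ) : a n k x = 0 := by
  induction n generalizing k x with
  | zero =>
    obtain ⟨k, rfl⟩ : ∃ j, k = j + 1 := ⟨k - 1, by omega⟩
    simp [a]
  | succ n ih =>
    obtain ⟨k, rfl⟩ : ∃ j, k = j + 1 := ⟨k - 1, by omega⟩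
    rw [a, ih _ (by omega), ih _ (by omega), ih _ (by omega)]; ring

lemma a_rec (n k : ℕ) (x : ℤ) :
    a (n + 1) (k + 1) x = (x + n - k) * a n k x + (k + 1) * a n (k + 1) x := by
  induction n generalizing k x with
  | zero =>
    cases k with
    | zero => simp [a]
    | succ k => simp [a]
  | succ n ih =>
    have e0 : a (n + 2) (k + 1) x =
      x * a (n + 1) k x + x * (a (n + 1) (k + 1) (x + 1) - a (n + 1) (k + 1) x) := by rw [a]
    have hA2 : a (n + 1) (k + 1) x =
      x * a n k x + x * (a n (k + 1) (x + 1) - a n (k + 1) x) := by rw [a]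
    have hB2 := ih k x
    have hB2' := ih k (x + 1)
    cases k with
    | zero =>
      have hA1 : a (n + 1) 0 x = x * (a n 0 (x + 1) - a n 0 x) := by rw [a]
      have hB1 := a_succ_zero n x
      push_cast at *
      linear_combination e0 + x * hB1 + x * hB2' - x * hB2 - (x + n + 1) * hA1 - hA2
    | succ k =>
      have hA1 : a (n + 1) (k + 1) x =
        x * a n k x + x * (a n (k + 1) (x + 1) - a n (k + 1) x) := by rw [a]
      have hB1 := ih k x
      push_cast at *
      linear_combination e0 + x * hB1 + x * hB2' - x * hB2 - (x + n + 1 - (k + 1)) * hA1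
        - (k + 2) * hA2

/-! ### Permutations -/

lemma wex_eq_sum {n : ℕ} (π : Equiv.Perm (Fin n)) :
    wex π = ∑ i, if i ≤ π i then 1 else 0 := by
  simp [wex, wexB]

lemma wex_zero {n : ℕ} (e : Equiv.Perm (Fin n)) :
    wex (Equiv.Perm.decomposeFin.symm (0, e)) = wex e + 1 := by
  rw [wex_eq_sum, wex_eq_sum, Fin.sum_univ_succ]
  simp [add_comm]

lemma wex_succ {n : ℕ} (e : Equiv.Perm (Fin n)) (i : Fin n) :
    wex (Equiv.Perm.decomposeFin.symm ((e i).succ, e)) =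
      if i ≤ e i then wex e else wex e + 1 := by
  rw [wex_eq_sum, wex_eq_sum, Fin.sum_univ_succ]
  rw [← Finset.add_sum_erase _ _ (Finset.mem_univ i),
    ← Finset.add_sum_erase Finset.univ (fun j => if j ≤ e j then 1 else 0) (Finset.mem_univ i)]
  have h : ∀ j ∈ Finset.univ.erase i,
      (if j.succ ≤ Equiv.Perm.decomposeFin.symm ((e i).succ, e) j.succ then 1 else 0) =
      if j ≤ e j then 1 else 0 := by
    intro j hj
    have hne : e j ≠ e i := fun h => (Finset.mem_erase.1 hj).1 (e.injective h)
    rw [Equiv.Perm.decomposeFin_symm_apply_succ, Equiv.swap_apply_of_ne_of_ne]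
    · simp
    · exact Fin.succ_ne_zero _
    · simpa using hne
  rw [Finset.sum_congr rfl h]
  simp
  split_ifs <;> omega

/-- number of permutations with `k` weak excedances. -/
def w (n k : ℕ) : ℕ := (Finset.univ.filter (fun π : Equiv.Perm (Fin n) => wex π = k)).card

lemma wex_le {n : ℕ} (e : Equiv.Perm (Fin n)) : wex e ≤ n := by
  simpa [wex] using Finset.card_le_univ (wexB e)

lemma inner_count {n : ℕ} (e : Equiv.Perm (Fin n)) (j : ℕ) :
    (∑ p : Fin (n + 1), if wex (Equiv.Perm.decomposeFin.symm (p, e)) = j then (1 : ℤ) else 0) =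
      (if wex e = j then (j : ℤ) else 0) + (if wex e + 1 = j then (n + 2 - j : ℤ) else 0) := by
  rw [Fin.sum_univ_succ, wex_zero, ← Equiv.sum_comp e]
  simp only [wex_succ]
  have h1 : ∀ i, (if (if i ≤ e i then wex e else wex e + 1) = j then (1 : ℤ) else 0) =
      (if i ≤ e i then 1 else 0) * (if wex e = j then (1 : ℤ) else 0) +
      (1 - (if i ≤ e i then 1 else 0)) * (if wex e + 1 = j then (1 : ℤ) else 0) := by
    intro i; split_ifs <;> simp_all
  have h2 : (∑ i, if i ≤ e i then (1 : ℤ) else 0) = wex e := by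
    rw [wex_eq_sum]; push_cast; rfl
  simp only [h1]
  rw [Finset.sum_add_distrib, ← Finset.sum_mul, ← Finset.sum_mul, Finset.sum_sub_distrib, h2]
  simp only [Finset.sum_const, Finset.card_univ, Fintype.card_fin, nsmul_eq_mul, mul_one]
  split_ifs with h h' h' 
  · omega
  · subst h; push_cast; ring
  · subst h'; ring
  · ring

lemma w_succ (n j : ℕ) : (w (n + 1) j : ℤ) =
    j * w n j + (n + 2 - j) * (Finset.univ.filter
      (fun π : Equiv.Perm (Fin n) => wex π + 1 = j)).card := by
  unfold w
  rw [Finset.card_filter, ← Equiv.sum_comp Equiv.Perm.decomposeFin.symm, Fintype.sum_prod_type_right]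
  push_cast
  simp only [inner_count]
  rw [Finset.sum_add_distrib, ← Finset.sum_filter, ← Finset.sum_filter]
  simp only [Finset.sum_const, nsmul_eq_mul]
  ring

lemma w_eq_a (n k : ℕ) : (w n k : ℤ) = a n k 1 := by
  induction n generalizing k with
  | zero =>
    cases k with
    | zero => simp [w, a, wex_eq_sum]
    | succ k => simp [w, a, wex_eq_sum]
  | succ n ih =>
    rw [w_succ]
    cases k with
    | zero => simp [a_succ_zero]
    | succ k =>
      have : (Finset.univ.filter (fun π : Equiv.Perm (Fin n) => wex π + 1 = k + 1)).card
        = w n k := by simp [w]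
      rw [this, ih, ih, a_rec]; push_cast; ring

/-! ### The column identity -/

lemma col_sum {k : ℕ} (x : ℤ) (U : Finset (Fin k)) :
    ∑ S ∈ U.powerset.filter (fun S => S.Nonempty),
      x ^ (U.filter (fun i => i ∈ S ∨ ∀ i' ∈ S, ¬ i' < i)).card =
    x * ((x + 1) ^ U.card - x ^ U.card) := by
  induction U using Finset.induction_on_max with
  | empty =>
    simp [Finset.filter_singleton]
  | insert e U hU ih =>
    have he : e ∉ U := fun h => lt_irrefl _ (hU e h)
    rw [Finset.sum_filter, Finset.sum_powerset_insert he, Finset.card_insert_of_notMem he]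
    rw [Finset.sum_filter] at ih
    have h1 : ∀ S ∈ U.powerset, (if S.Nonempty then
        x ^ ((insert e U).filter (fun i => i ∈ S ∨ ∀ i' ∈ S, ¬ i' < i)).card else 0) =
        (if S.Nonempty then
        x ^ (U.filter (fun i => i ∈ S ∨ ∀ i' ∈ S, ¬ i' < i)).card else 0) := by
      intro S hS
      rw [Finset.mem_powerset] at hS
      split_ifs with hn
      · rw [Finset.filter_insert, if_neg]
        obtain ⟨s, hs⟩ := hn
        rintro (h | h)
        · exact he (hS h)
        · exact h s hs (hU s (hS hs))
      · rfl
    have h2 : ∀ S ∈ U.powerset, (if (insert e S).Nonempty then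
        x ^ ((insert e U).filter (fun i => i ∈ insert e S ∨ ∀ i' ∈ insert e S, ¬ i' < i)).card else 0) =
        x * (if S.Nonempty then
        x ^ (U.filter (fun i => i ∈ S ∨ ∀ i' ∈ S, ¬ i' < i)).card else 0) +
        (if S = ∅ then x ^ (U.card + 1) else 0) := by
      intro S hS
      rw [Finset.mem_powerset] at hS
      rw [if_pos (Finset.insert_nonempty _ _), Finset.filter_insert, if_pos (by simp),
        Finset.card_insert_of_notMem (by simp [he])]
      have h3 : U.filter (fun i => i ∈ insert e S ∨ ∀ i' ∈ insert e S, ¬ i' < i) =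
          U.filter (fun i => i ∈ S ∨ ∀ i' ∈ S, ¬ i' < i) := by
        apply Finset.filter_congr
        intro i hi
        have hne : i ≠ e := (hU i hi).ne
        simp [hne, (hU i hi).le]
      rw [h3]
      rcases S.eq_empty_or_nonempty with rfl | hn
      · simp
      · simp [hn, hn.ne_empty, pow_succ, mul_comm]
    rw [Finset.sum_congr rfl h1, Finset.sum_congr rfl h2, Finset.sum_add_distrib,
      ← Finset.mul_sum, ih, Finset.sum_ite_eq']
    simp
    ring

/-! ### Tableaux -/

open Classical in
/-- unrestricted rows -/
noncomputable def unr {k m : ℕ} (T : Fin k → Fin m → Fin 3) : Finset (Fin k) :=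
  Finset.univ.filter (fun i => ∀ j, T i j = 0 → ∀ i' < i, T i' j ≠ 1)

open Classical in
/-- weighted count of tableaux -/
noncomputable def f (k m : ℕ) (x : ℤ) : ℤ :=
  ∑ T ∈ Finset.univ.filter (fun T : Fin k → Fin m → Fin 3 => IsPermTableau T), x ^ (unr T).card

lemma f_zero_right (k : ℕ) (x : ℤ) : f k 0 x = x ^ k := by
  classical
  have h : ∀ T : Fin k → Fin 0 → Fin 3, IsPermTableau T := fun T =>
    ⟨fun j => j.elim0, fun _ j => j.elim0, fun _ j => j.elim0⟩
  simp [f, h, unr]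

lemma f_zero_left (m : ℕ) (x : ℤ) : f 0 (m + 1) x = 0 := by
  classical
  have h : ∀ T : Fin 0 → Fin (m + 1) → Fin 3, ¬ IsPermTableau T := fun T hT =>
    (hT.1 0).elim fun i _ => i.elim0
  simp [f, h]

/-- add an empty row at the bottom -/
def addRow {k m : ℕ} (T : Fin k → Fin m → Fin 3) : Fin (k + 1) → Fin m → Fin 3 :=
  Fin.snoc (α := fun _ => Fin m → Fin 3) T (fun _ => 2)

@[simp] lemma addRow_castSucc {k m : ℕ} (T : Fin k → Fin m → Fin 3) (i : Fin k) :
    addRow T i.castSucc = T i := by simp [addRow]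

@[simp] lemma addRow_last {k m : ℕ} (T : Fin k → Fin m → Fin 3) :
    addRow T (Fin.last k) = fun _ => 2 := by simp [addRow]

lemma isPT_addRow {k m : ℕ} (T : Fin k → Fin m → Fin 3) :
    IsPermTableau (addRow T) ↔ IsPermTableau T := by
  unfold IsPermTableau
  refine and_congr ?_ (and_congr ?_ ?_)
  · simp [Fin.exists_fin_succ']
  · simp [Fin.forall_fin_succ']
  · simp [Fin.forall_fin_succ']

lemma unr_addRow {k m : ℕ} (T : Fin k → Fin m → Fin 3) :
    (unr (addRow T)).card = (unr T).card + 1 := by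
  classical
  unfold unr
  rw [Finset.card_filter, Finset.card_filter, Fin.sum_univ_castSucc]
  simp [Fin.forall_fin_succ']

/-- add a column on the left, with ones in the rows of `S` -/
def addCol {k m : ℕ} (T : Fin k → Fin m → Fin 3) (S : Finset (Fin k)) :
    Fin k → Fin (m + 1) → Fin 3 :=
  fun i => Fin.cons (α := fun _ => Fin 3) (if i ∈ S then 1 else 0) (T i)

@[simp] lemma addCol_zero {k m : ℕ} (T : Fin k → Fin m → Fin 3) (S : Finset (Fin k)) (i : Fin k) :
    addCol T S i 0 = if i ∈ S then 1 else 0 := by simp [addCol]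

@[simp] lemma addCol_succ {k m : ℕ} (T : Fin k → Fin m → Fin 3) (S : Finset (Fin k)) (i : Fin k)
    (j : Fin m) : addCol T S i j.succ = T i j := by simp [addCol]

lemma ite_one {p : Prop} [Decidable p] : (if p then (1 : Fin 3) else 0) = 1 ↔ p := by
  split_ifs <;> simp_all

lemma ite_zero {p : Prop} [Decidable p] : (if p then (1 : Fin 3) else 0) = 0 ↔ ¬ p := by
  split_ifs <;> simp_all

lemma ite_two {p : Prop} [Decidable p] : (if p then (1 : Fin 3) else 0) ≠ 2 := by
  split_ifs <;> decide

lemma isPT_addCol {k m : ℕ} (T : Fin k → Fin m → Fin 3) (S : Finset (Fin k)) :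
    IsPermTableau (addCol T S) ↔ IsPermTableau T ∧ S.Nonempty ∧ S ⊆ unr T := by
  have h1 : (∀ j : Fin (m + 1), ∃ i, addCol T S i j = 1) ↔
      S.Nonempty ∧ ∀ j : Fin m, ∃ i, T i j = 1 := by
    simp only [Fin.forall_fin_succ, addCol_zero, addCol_succ, ite_one]; rfl
  have h2 : (∀ (i : Fin k) (j : Fin (m + 1)), addCol T S i j ≠ 2 →
      ∀ (i' : Fin k) (j' : Fin (m + 1)), i' ≤ i → j' ≤ j → addCol T S i' j' ≠ 2) ↔
      (∀ (i : Fin k) (j : Fin m), T i j ≠ 2 →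
      ∀ (i' : Fin k) (j' : Fin m), i' ≤ i → j' ≤ j → T i' j' ≠ 2) := by
    simp only [Fin.forall_fin_succ, addCol_zero, addCol_succ]
    simp [ite_two]
  have h3 : (∀ (i : Fin k) (j : Fin (m + 1)), addCol T S i j = 0 →
      ¬ ((∃ i' < i, addCol T S i' j = 1) ∧ (∃ j' < j, addCol T S i j' = 1))) ↔
      (∀ (i : Fin k) (j : Fin m), T i j = 0 →
      ¬ ((∃ i' < i, T i' j = 1) ∧ (∃ j' < j, T i j' = 1))) ∧ S ⊆ unr T := by
    simp only [Fin.forall_fin_succ, Fin.exists_fin_succ, addCol_zero, addCol_succ, ite_one]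
    constructor
    · intro h
      refine ⟨fun i j h0 hh => (h i).2 j h0 ⟨hh.1, Or.inr ?_⟩, fun i hi => ?_⟩
      · simpa using hh.2
      · simp only [unr, Finset.mem_filter, Finset.mem_univ, true_and]
        intro j h0 i' hi' h1
        exact (h i).2 j h0 ⟨⟨i', hi', h1⟩, Or.inl ⟨Fin.succ_pos _, hi⟩⟩
    · rintro ⟨h, hS⟩ i
      refine ⟨by simp, fun j h0 => ?_⟩
      rintro ⟨⟨i', hi', h1⟩, (⟨-, hi⟩ | ⟨j', hj', h2⟩)⟩
      · have := hS hi
        simp only [unr, Finset.mem_filter, Finset.mem_univ, true_and] at this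
        exact this j h0 i' hi' h1
      · exact h i j h0 ⟨⟨i', hi', h1⟩, j', by simpa using hj', h2⟩
  unfold IsPermTableau
  rw [h1, h2, h3]
  tauto

lemma unr_addCol {k m : ℕ} (T : Fin k → Fin m → Fin 3) (S : Finset (Fin k)) :
    unr (addCol T S) = (unr T).filter (fun i => i ∈ S ∨ ∀ i' ∈ S, ¬ i' < i) := by
  classical
  ext i
  simp only [unr, Finset.mem_filter, Finset.mem_univ, true_and, Fin.forall_fin_succ,
    addCol_zero, addCol_succ, ne_eq, ite_one, ite_zero]
  constructor
  · rintro ⟨h1, h2⟩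
    refine ⟨h2, ?_⟩
    by_cases hi : i ∈ S
    · exact Or.inl hi
    · exact Or.inr fun i' h' hlt => h1 hi i' hlt h'
  · rintro ⟨h2, h1⟩
    refine ⟨fun hi i' hlt h' => ?_, h2⟩
    rcases h1 with h1 | h1
    · exact hi h1
    · exact h1 i' h' hlt

lemma restore {k m : ℕ} (T : Fin (k + 1) → Fin (m + 1) → Fin 3) (hT : IsPermTableau T)
    (h : T (Fin.last k) 0 = 2) : addRow (fun i => T i.castSucc) = T := by
  funext i
  refine Fin.lastCases ?_ (fun i => ?_) i
  · rw [addRow_last]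
    funext j
    by_contra hne
    exact hT.2.1 (Fin.last k) j (Ne.symm hne) (Fin.last k) 0 le_rfl (Fin.zero_le _) h
  · simp

lemma restore2 {k m : ℕ} (T : Fin (k + 1) → Fin (m + 1) → Fin 3) (hT : IsPermTableau T)
    (h : T (Fin.last k) 0 ≠ 2) :
    addCol (fun i j => T i j.succ) (Finset.univ.filter (fun i => T i 0 = 1)) = T := by
  funext i j
  refine Fin.cases ?_ (fun j => ?_) j
  · have h2 : T i 0 ≠ 2 := hT.2.1 _ _ h i 0 (Fin.le_last _) le_rfl
    simp only [addCol_zero, Finset.mem_filter, Finset.mem_univ, true_and]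
    generalize T i 0 = t at h2
    revert h2
    revert t
    decide
  · simp

lemma f_succ (k m : ℕ) (x : ℤ) : f (k + 1) (m + 1) x =
    x * f k (m + 1) x + x * (f (k + 1) m (x + 1) - f (k + 1) m x) := by
  classical
  have key1 : ∑ T ∈ Finset.univ.filter (fun T : Fin (k + 1) → Fin (m + 1) → Fin 3 =>
      IsPermTableau T ∧ T (Fin.last k) 0 = 2), x ^ (unr T).card = x * f k (m + 1) x := by
    unfold f
    rw [Finset.mul_sum]
    symm
    refine Finset.sum_nbij' addRow (fun T i => T i.castSucc) ?_ ?_ ?_ ?_ ?_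
    · intro T hT
      simp only [Finset.mem_filter, Finset.mem_univ, true_and] at hT ⊢
      exact ⟨(isPT_addRow T).2 hT, by simp⟩
    · intro T hT
      simp only [Finset.mem_filter, Finset.mem_univ, true_and] at hT ⊢
      rw [← isPT_addRow, restore T hT.1 hT.2]
      exact hT.1
    · intro T hT
      funext i; simp
    · intro T hT
      simp only [Finset.mem_filter, Finset.mem_univ, true_and] at hT
      exact restore T hT.1 hT.2
    · intro T hT
      rw [unr_addRow, pow_succ, mul_comm]
  have key2 : ∑ T ∈ Finset.univ.filter (fun T : Fin (k + 1) → Fin (m + 1) → Fin 3 =>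
      IsPermTableau T ∧ ¬ T (Fin.last k) 0 = 2), x ^ (unr T).card =
      x * (f (k + 1) m (x + 1) - f (k + 1) m x) := by
    unfold f
    rw [← Finset.sum_sub_distrib, Finset.mul_sum]
    simp only [← col_sum]
    rw [Finset.sum_sigma']
    symm
    refine Finset.sum_nbij' (fun p => addCol p.1 p.2)
      (fun T => ⟨fun i j => T i j.succ, Finset.univ.filter (fun i => T i 0 = 1)⟩) ?_ ?_ ?_ ?_ ?_
    · rintro ⟨T, S⟩ hT
      simp only [Finset.mem_sigma, Finset.mem_filter, Finset.mem_univ, true_and,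
        Finset.mem_powerset] at hT ⊢
      exact ⟨(isPT_addCol T S).2 ⟨hT.1, hT.2.2, hT.2.1⟩, by rw [addCol_zero]; exact ite_two⟩
    · intro T hT
      simp only [Finset.mem_filter, Finset.mem_univ, true_and] at hT
      have h := hT.1
      rw [← restore2 T hT.1 hT.2, isPT_addCol] at h
      simp only [Finset.mem_sigma, Finset.mem_filter, Finset.mem_univ, true_and,
        Finset.mem_powerset]
      exact ⟨h.1, h.2.2, h.2.1⟩
    · rintro ⟨T, S⟩ hT
      simp [ite_one]
    · intro T hT
      simp only [Finset.mem_filter, Finset.mem_univ, true_and] at hT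
      exact restore2 T hT.1 hT.2
    · rintro ⟨T, S⟩ hT
      simp only [unr_addCol]
  rw [← key1, ← key2]
  unfold f
  rw [← Finset.sum_filter_add_sum_filter_not _ (fun T => T (Fin.last k) 0 = 2),
    Finset.filter_filter, Finset.filter_filter]

lemma f_eq_a (k m : ℕ) (x : ℤ) : f k m x = a (k + m) k x := by
  induction h : k + m generalizing k m x with
  | zero =>
    obtain ⟨rfl, rfl⟩ : k = 0 ∧ m = 0 := by omega
    simp [f_zero_right, a]
  | succ n ih =>
    rcases k with _ | k
    · obtain rfl : m = n + 1 := by omega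
      rw [f_zero_left, a_succ_zero]
    · rcases m with _ | m
      · obtain rfl : k = n := by omega
        rw [a, f_zero_right, ← ih k 0 x rfl, f_zero_right, a_gt _ _ (by omega),
          a_gt _ _ (by omega)]
        ring
      · rw [a, f_succ, ih k (m + 1) x (by omega), ih (k + 1) m x (by omega),
          ih (k + 1) m (x + 1) (by omega)]

lemma f_one (k m : ℕ) :
    f k m 1 = (Nat.card {T : Fin k → Fin m → Fin 3 // IsPermTableau T} : ℤ) := by
  classical
  simp [f, Nat.card_eq_fintype_card, Fintype.card_subtype]

end PermTab

theorem card_tableaux_eq_card_wex (n k : ℕ) (hk : k ≤ n) :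
    Nat.card {T : Fin k → Fin (n - k) → Fin 3 // IsPermTableau T} =
    (Finset.univ.filter (fun π : Equiv.Perm (Fin n) => wex π = k)).card := by
  have h := PermTab.w_eq_a n k
  have h2 := PermTab.f_eq_a k (n - k) 1
  rw [PermTab.f_one, Nat.add_sub_cancel' hk, ← h] at h2
  exact_mod_cast h2
end
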